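/- Assume the pairs (𝓡₁, 𝓡₂) and (𝓡₁*, 𝓡₂*) are incommensurate, let r > 1, and for k = 1,2 and α_k ∈ 𝓐_k assume u_k(·, α_k) ∈ L^∞(ℝ²; ℝ³) is 𝓡_𝓜-periodic and v_{(α₁,α₂)} ∈ L^∞_{2r}(ℝ² × [−L_u^z, L_u^z]) is even. Then for each j ∈ {1,2} and Lebesgue-almost every (γ₁, γ₂) ∈ Γ₁ × Γ₂, the truncated interlayer energy densities e^{(inter)}_{j,N,γ}(u) := (|Γ_j|(2N+1)²)^{−1} Σ_{R_j ∈ 𝓡_j(N)} Σ_{α_j ∈ 𝓐_j} (1/2) Σ_{R_{3−j} ∈ 𝓡_{3−j}, α_{3−j} ∈ 𝓐_{3−j}} v_{(α₁,α₂)}(Y_j(R_j + γ_j, α_j) − Y_{3−j}(R_{3−j} + γ_{3−j}, α_{3−j})) converge, as N → ∞, to e^{(inter)}_{j,γ}(u) := (2|Γ_𝓜|)^{−1} Σ_{α₁,α₂} ∫_{ℝ²} v_{(α₁,α₂)}(A₁ξ + γ₁ + τ₁^{(α₁)} + u₁(A₁ξ + γ₁, α₁) − A₂ξ − γ₂ −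 τ₂^{(α₂)} − u₂(A₂ξ + γ₂, α₂)) dξ. -/

import Mathlib

open scoped Real BigOperators
open MeasureTheory Filter Topology Matrix

noncomputable section

/-- The 2×2 rotation matrix through angle `φ`. -/
def Rot (φ : ℝ) : Matrix (Fin 2) (Fin 2) ℝ :=
  !![Real.cos φ, -Real.sin φ; Real.sin φ, Real.cos φ]

/-- Euclidean norm on `ℝ²`. -/
def norm2 (v : Fin 2 → ℝ) : ℝ := Real.sqrt (v 0 ^ 2 + v 1 ^ 2)

/-- Euclidean norm on `ℝ³`. -/
def norm3 (v : Fin 3 → ℝ) : ℝ := Real.sqrt (v 0 ^ 2 + v 1 ^ 2 + v 2 ^ 2)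

/-- Cast an integer vector to a real vector. -/
def iv (n : Fin 2 → ℤ) : Fin 2 → ℝ := fun i => (n i : ℝ)

/-- The lattice `M ℤ²`. -/
def lat (M : Matrix (Fin 2) (Fin 2) ℝ) : Set (Fin 2 → ℝ) :=
  {v | ∃ n : Fin 2 → ℤ, v = M.mulVec (iv n)}

/-- The unit cell `M [0,1)²`. -/
def cell (M : Matrix (Fin 2) (Fin 2) ℝ) : Set (Fin 2 → ℝ) :=
  {v | ∃ t : Fin 2 → ℝ, (∀ i, t i ∈ Set.Ico (0 : ℝ) 1) ∧ v = M.mulVec t}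

/-- The reciprocal matrix `2π M⁻ᵀ`. -/
def recip (M : Matrix (Fin 2) (Fin 2) ℝ) : Matrix (Fin 2) (Fin 2) ℝ :=
  (2 * π) • (M⁻¹)ᵀ

/-- A pair of lattices with reciprocal-lattice matrices `B1`, `B2` is incommensurate iff
`G₁ + G₂ = 0` with `G_k` in the respective reciprocal lattice implies `G₁ = G₂ = 0`. -/
def Incommensurate (B1 B2 : Matrix (Fin 2) (Fin 2) ℝ) : Prop :=
  ∀ G1 ∈ lat B1, ∀ G2 ∈ lat B2, G1 + G2 = 0 → G1 = 0 ∧ G2 = 0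

/-- Euclidean distance from `v ∈ ℝ²` to the integer lattice `ℤ²`. -/
def distZ2 (v : Fin 2 → ℝ) : ℝ := ⨅ m : Fin 2 → ℤ, norm2 (v - iv m)

/-- `θ` is a `(q,K,σ)`-Diophantine 2D rotation. -/
def IsDiophantine (A : Matrix (Fin 2) (Fin 2) ℝ) (q K σ θ : ℝ) : Prop :=
  ∀ n : Fin 2 → ℤ, n ≠ 0 →
    K / norm2 (iv n) ^ (2 * σ) ≤ distZ2 ((q • (Aᵀ * Rot θ * (A⁻¹)ᵀ)).mulVec (iv n)) ∧
    K / norm2 (iv n) ^ (2 * σ) ≤ distZ2 ((q⁻¹ • (Aᵀ * Rot (-θ) * (A⁻¹)ᵀ)).mulVec (iv n))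

/-- The moiré length scale ratio `ρ_𝓜`. -/
def rhoM (q θ : ℝ) : ℝ :=
  (Real.sqrt ((Real.sqrt q - (Real.sqrt q)⁻¹) ^ 2 + 4 * Real.sin (θ / 2) ^ 2))⁻¹

/-- Riemann zeta function (for real `s > 1`, via its Dirichlet series). -/
def zetaR (s : ℝ) : ℝ := ∑' n : ℕ, ((n : ℝ) + 1) ^ (-s)

/-- Operator (spectral) norm of a 2×2 real matrix w.r.t. the Euclidean norm. -/
def opNorm2 (M : Matrix (Fin 2) (Fin 2) ℝ) : ℝ :=
  ⨆ x : {x : Fin 2 → ℝ // norm2 x ≤ 1}, norm2 (M.mulVec x.1)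

/-- Embedding `ℝ² ↪ ℝ³`, `x ↦ (x, 0)`. -/
def emb (x : Fin 2 → ℝ) : Fin 3 → ℝ := ![x 0, x 1, 0]

/-- Japanese bracket `⟨x⟩ = (1 + |x|²)^{1/2}` on `ℝ³`. -/
def jap3 (x : Fin 3 → ℝ) : ℝ := Real.sqrt (1 + norm3 x ^ 2)

/-- The region `ℝ² × [−L, L] ⊆ ℝ³`. -/
def slab (L : ℝ) : Set (Fin 3 → ℝ) := {x | x 2 ∈ Set.Icc (-L) L}

/-- Euclidean inner product on `ℝ²`. -/
def dot2 (a b : Fin 2 → ℝ) : ℝ := ∑ i, a i * b i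

/-- The index box `⟦−N, N⟧²`. -/
def box (N : ℕ) : Finset (Fin 2 → ℤ) :=
  Finset.Icc (fun _ => -(N : ℤ)) (fun _ => (N : ℤ))

/-- The normalized Dirichlet kernel `Δ_N^j` of the lattice `A_j ℤ²`. -/
def Dir (Aj : Matrix (Fin 2) (Fin 2) ℝ) (N : ℕ) (G : Fin 2 → ℝ) : ℂ :=
  (((2 * N + 1 : ℝ)) ^ 2)⁻¹ •
    ∑ n ∈ box N, Complex.exp (Complex.I * (dot2 G (Aj.mulVec (iv n)) : ℝ))

/-!
The thermodynamic limit is an ergodic theorem on the moiré torus. On the slice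
`γ₂ = c + A₂ A₁⁻¹ γ₁` the interaction of a site of layer 1 at `z` with the whole of layer 2 is the
sum of `f` over the translates of `z` by the moiré lattice, where `f z` is the interaction at `z`
and `c + A₂ A₁⁻¹ z`. This sum is an integrable function on the torus `ℝ² / 𝓡_𝓜`, and the energy
density averages it over the translations by the points of `𝓡₁` in a box. Since the reciprocal
lattices are incommensurate, no nontrivial character of the torus is invariant under `𝓡₁`, so that
Weyl's criterion gives convergence for continuous functions. The weak type (1, 1) inequality for
maximal averages over boxes, which follows from Vitali's covering argument, and Banach's principle
extend it to almost everywhere convergence for integrable functions. The limit, a mean over the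
moiré cell, unfolds to the integral of `f` over the plane, and Fubini's theorem over the slices
gives the result for almost every `(γ₁, γ₂)`. The decay rate `2r > 2` makes `f` integrable, and the
evenness of `v` makes the roles of the two layers symmetric.
-/

section

open Finset
open scoped ENNReal NNReal

variable {ι : Type*} [Fintype ι] [DecidableEq ι]

/-! ### Integer boxes -/

/-- The box `⟦-N, N⟧^ι` of `ℤ^ι`, over which the ergodic averages are taken. In the plane it is
definitionally `box N`. -/
def intBox (ι : Type*) [Fintype ι] [DecidableEq ι] (N : ℕ) : Finset (ι → ℤ) :=
  Finset.Icc (fun _ => -(N : ℤ)) (fun _ => (N : ℤ))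

theorem mem_intBox {N : ℕ} {m : ι → ℤ} : m ∈ intBox ι N ↔ ∀ i, |m i| ≤ N := by
  simp only [intBox, Finset.mem_Icc, Pi.le_def, ← forall_and, abs_le]

theorem intBox_eq_piFinset (N : ℕ) :
    intBox ι N = Fintype.piFinset fun _ => Finset.Icc (-(N : ℤ)) N := by
  ext m
  simp [mem_intBox, abs_le]

theorem card_intBox (N : ℕ) : #(intBox ι N) = (2 * N + 1) ^ Fintype.card ι := by
  rw [intBox_eq_piFinset, Fintype.card_piFinset, prod_const, Int.card_Icc, card_univ]
  congr 1
  lia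

theorem intBox_nonempty (N : ℕ) : (intBox ι N).Nonempty :=
  ⟨0, mem_intBox.2 fun i => by simp⟩

theorem card_intBox_five_mul_le (N : ℕ) :
    #(intBox ι (5 * N)) ≤ 5 ^ Fintype.card ι * #(intBox ι N) := by
  rw [card_intBox, card_intBox, ← mul_pow]
  gcongr
  lia

theorem mem_closedBall_iff_sub_mem_intBox {n m : ι → ℤ} {N : ℕ} :
    m ∈ Metric.closedBall n (N : ℝ) ↔ m - n ∈ intBox ι N := by
  rw [Metric.mem_closedBall, dist_pi_le_iff (by positivity), mem_intBox]
  refine forall_congr' fun i => ?_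
  rw [Int.dist_eq, Pi.sub_apply]
  norm_cast

theorem add_mem_intBox {L K : ℕ} {m n : ι → ℤ} (hm : m ∈ intBox ι L) (hn : n ∈ intBox ι K) :
    m + n ∈ intBox ι (L + K) := by
  rw [mem_intBox] at *
  intro i
  push_cast
  exact (abs_add_le _ _).trans (add_le_add (hm i) (hn i))

theorem tendsto_card_intBox_add_div (K : ℕ) :
    Tendsto (fun L => (#(intBox ι (L + K)) / #(intBox ι L) : ℝ)) atTop (𝓝 1) := by
  have h : Tendsto (fun L : ℕ => 1 + (2 * K : ℝ) / (2 * L + 1)) atTop (𝓝 (1 + 0)) :=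
    tendsto_const_nhds.add <| tendsto_const_nhds.div_atTop <|
      tendsto_atTop_add_const_right _ _ <| tendsto_natCast_atTop_atTop.const_mul_atTop two_pos
  have h_pow := h.pow (Fintype.card ι)
  rw [add_zero, one_pow] at h_pow
  refine h_pow.congr fun L => ?_
  rw [card_intBox, card_intBox]
  push_cast
  rw [← div_pow]
  congr 1
  field_simp
  ring

/-! ### Maximal inequality -/

section Covering

variable {S : Finset (ι → ℤ)} {ρ : (ι → ℤ) → ℕ} {K : ℕ}

theorem exists_disjoint_translates_intBox (hρ : ∀ n ∈ S, ρ n ≤ K) :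
    ∃ u ⊆ S,
      (u : Set (ι → ℤ)).PairwiseDisjoint (fun b => (intBox ι (ρ b)).map (addRightEmbedding b)) ∧
      #S ≤ 5 ^ Fintype.card ι * ∑ b ∈ u, #(intBox ι (ρ b)) := by
  obtain ⟨u, huS, hdisj, hcov⟩ :=
    Vitali.exists_disjoint_subfamily_covering_enlargement_closedBall (S : Set (ι → ℤ)) id
      (fun n => (ρ n : ℝ)) K (fun n hn => by exact_mod_cast hρ n hn) 5 (by norm_num)
  lift u to Finset (ι → ℤ) using S.finite_toSet.subset huS
  have mem_ball {x b : ι → ℤ} (hx : x ∈ (intBox ι (ρ b)).map (addRightEmbedding b)) :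
      x ∈ Metric.closedBall b (ρ b : ℝ) := by
    obtain ⟨y, hy, rfl⟩ := Finset.mem_map.1 hx
    rwa [mem_closedBall_iff_sub_mem_intBox, addRightEmbedding_apply, add_sub_cancel_right]
  have hcover : S ⊆ u.biUnion fun b => (intBox ι (5 * ρ b)).map (addRightEmbedding b) := by
    intro n hn
    obtain ⟨b, hb, hnb⟩ := hcov n hn
    have hmem : n ∈ Metric.closedBall b ((5 * ρ b : ℕ) : ℝ) := by
      simpa using hnb (Metric.mem_closedBall_self (by positivity))
    rw [mem_closedBall_iff_sub_mem_intBox] at hmem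
    exact Finset.mem_biUnion.2 ⟨b, hb, Finset.mem_map.2 ⟨n - b, hmem, by simp⟩⟩
  refine ⟨u, by exact_mod_cast huS, fun a ha b hb hab => ?_, ?_⟩
  · exact Finset.disjoint_left.2 fun x hxa hxb =>
      Set.disjoint_left.1 (hdisj ha hb hab) (mem_ball hxa) (mem_ball hxb)
  · refine (card_le_card hcover).trans (card_biUnion_le.trans ?_)
    rw [mul_sum]
    gcongr with b
    rw [card_map]
    exact card_intBox_five_mul_le _

theorem mul_card_le_sum_intBox {L : ℕ} {f : (ι → ℤ) → ℝ≥0∞} {c : ℝ≥0∞} (hS : S ⊆ intBox ι L)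
    (h : ∀ n ∈ S, ∃ N ≤ K, c * #(intBox ι N) ≤ ∑ m ∈ intBox ι N, f (m + n)) :
    c * #S ≤ 5 ^ Fintype.card ι * ∑ m ∈ intBox ι (L + K), f m := by
  choose! ρ hρK hρ using h
  obtain ⟨u, huS, hdisj, hcard⟩ := exists_disjoint_translates_intBox hρK
  calc c * #S
      ≤ c * ((5 ^ Fintype.card ι * ∑ b ∈ u, #(intBox ι (ρ b)) : ℕ) : ℝ≥0∞) := by gcongr
    _ = 5 ^ Fintype.card ι * ∑ b ∈ u, c * #(intBox ι (ρ b)) := by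
        push_cast
        rw [mul_left_comm, mul_sum]
    _ ≤ 5 ^ Fintype.card ι * ∑ b ∈ u, ∑ m ∈ intBox ι (ρ b), f (m + b) := by
        gcongr with b hb
        exact hρ b (huS hb)
    _ = 5 ^ Fintype.card ι *
          ∑ m ∈ u.biUnion fun b => (intBox ι (ρ b)).map (addRightEmbedding b), f m := by
        simp [sum_biUnion hdisj]
    _ ≤ 5 ^ Fintype.card ι * ∑ m ∈ intBox ι (L + K), f m := by
        gcongr
        simp only [biUnion_subset, map_subset_iff_subset_preimage]
        intro b hb y hy
        rw [mem_preimage, addRightEmbedding_apply, add_comm y]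
        refine add_mem_intBox (hS (huS hb)) (mem_intBox.2 fun i => (mem_intBox.1 hy i).trans ?_)
        exact_mod_cast hρK b (huS hb)

end Covering

section Maximal

section

variable {G X : Type*} [AddGroup G] [AddAction G X] [MeasurableSpace X] [MeasurableConstVAdd G X]
  {f : X → ℝ≥0∞}

theorem measurable_sum_const_vadd (hf : Measurable f) (s : Finset G) :
    Measurable fun x => ∑ n ∈ s, f (n +ᵥ x) :=
  Finset.measurable_sum _ fun n _ => hf.comp (measurable_const_vadd n)

theorem lintegral_sum_const_vadd {μ : Measure X} [VAddInvariantMeasure G X μ] (hf : Measurable f)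
    (s : Finset G) : ∫⁻ x, ∑ n ∈ s, f (n +ᵥ x) ∂μ = #s * ∫⁻ x, f x ∂μ := by
  have hterm (n : G) : Measurable fun x => f (n +ᵥ x) := hf.comp (measurable_const_vadd n)
  rw [lintegral_finsetSum _ fun n _ => hterm n]
  simp [(measurePreserving_vadd _ μ).lintegral_comp hf]

end

variable {X : Type*} [AddAction (ι → ℤ) X] {f : X → ℝ≥0∞}

/-- The points at which the average of `f` over some box `⟦-N, N⟧^ι` with `N ≤ K` is at least
`c`. The normalisation is moved to the other side to avoid divisions. -/
def maximalSet (f : X → ℝ≥0∞) (c : ℝ≥0∞) (K : ℕ) : Set X :=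
  {x | ∃ N ≤ K, c * #(intBox ι N) ≤ ∑ m ∈ intBox ι N, f (m +ᵥ x)}

theorem mul_sum_indicator_maximalSet_le (f : X → ℝ≥0∞) (c : ℝ≥0∞) (K L : ℕ) (x : X) :
    c * ∑ n ∈ intBox ι L, (maximalSet (ι := ι) f c K).indicator 1 (n +ᵥ x) ≤
      5 ^ Fintype.card ι * ∑ m ∈ intBox ι (L + K), f (m +ᵥ x) := by
  classical
  have h := mul_card_le_sum_intBox (f := fun m => f (m +ᵥ x))
    (filter_subset (fun n => n +ᵥ x ∈ maximalSet (ι := ι) f c K) (intBox ι L)) fun n hn => by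
      simpa only [maximalSet, Set.mem_ofPred_eq, add_vadd] using (mem_filter.1 hn).2
  simpa [Set.indicator_apply] using h

variable [MeasurableSpace X] [MeasurableConstVAdd (ι → ℤ) X]

theorem measurableSet_maximalSet (hf : Measurable f) (c : ℝ≥0∞) (K : ℕ) :
    MeasurableSet (maximalSet (ι := ι) f c K) := by
  have h_iUnion : maximalSet (ι := ι) f c K =
      ⋃ N ∈ Finset.range (K + 1), {x | c * #(intBox ι N) ≤ ∑ m ∈ intBox ι N, f (m +ᵥ x)} := by
    ext x
    simp [maximalSet]
  rw [h_iUnion]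
  exact Finset.measurableSet_biUnion _ fun N _ =>
    measurableSet_le measurable_const (measurable_sum_const_vadd hf _)

variable {μ : Measure X} [VAddInvariantMeasure (ι → ℤ) X μ]

theorem mul_measure_maximalSet_mul_card_le (hf : Measurable f) (c : ℝ≥0∞) (K L : ℕ) :
    c * μ (maximalSet (ι := ι) f c K) * #(intBox ι L) ≤
      5 ^ Fintype.card ι * (∫⁻ x, f x ∂μ) * #(intBox ι (L + K)) := by
  have hE := measurableSet_maximalSet (ι := ι) hf c K
  have hE_ind := measurable_one (α := ℝ≥0∞).indicator hE
  calc c * μ (maximalSet (ι := ι) f c K) * #(intBox ι L)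
      = ∫⁻ x, c * ∑ n ∈ intBox ι L, (maximalSet (ι := ι) f c K).indicator 1 (n +ᵥ x) ∂μ := by
        rw [lintegral_const_mul _ (measurable_sum_const_vadd hE_ind _),
          lintegral_sum_const_vadd hE_ind, lintegral_indicator_one hE]
        ring
    _ ≤ ∫⁻ x, 5 ^ Fintype.card ι * ∑ m ∈ intBox ι (L + K), f (m +ᵥ x) ∂μ :=
        lintegral_mono (mul_sum_indicator_maximalSet_le f c K L)
    _ = 5 ^ Fintype.card ι * (∫⁻ x, f x ∂μ) * #(intBox ι (L + K)) := by
        rw [lintegral_const_mul _ (measurable_sum_const_vadd hf _), lintegral_sum_const_vadd hf]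
        ring

theorem mul_measure_maximalSet_le (hf : Measurable f) (c : ℝ≥0∞) (K : ℕ) :
    c * μ (maximalSet (ι := ι) f c K) ≤ 5 ^ Fintype.card ι * ∫⁻ x, f x ∂μ := by
  rcases eq_or_ne (∫⁻ x, f x ∂μ) ⊤ with htop | htop
  · simp [htop]
  have hlim : Tendsto (fun L => 5 ^ Fintype.card ι * (∫⁻ x, f x ∂μ) *
      (#(intBox ι (L + K)) / #(intBox ι L))) atTop (𝓝 (5 ^ Fintype.card ι * ∫⁻ x, f x ∂μ)) := by
    have h := ENNReal.tendsto_ofReal (tendsto_card_intBox_add_div (ι := ι) K)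
    have h_mul := ENNReal.Tendsto.const_mul (a := 5 ^ Fintype.card ι * ∫⁻ x, f x ∂μ) h
      (Or.inr (ENNReal.mul_ne_top (by simp) htop))
    rw [ENNReal.ofReal_one, mul_one] at h_mul
    refine h_mul.congr fun L => ?_
    rw [ENNReal.ofReal_div_of_pos (by exact_mod_cast (intBox_nonempty L).card_pos),
      ENNReal.ofReal_natCast, ENNReal.ofReal_natCast]
  refine ge_of_tendsto' hlim fun L => ?_
  rw [← mul_div_assoc, ENNReal.le_div_iff_mul_le (by simp [(intBox_nonempty L).ne_empty])
    (by simp)]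
  exact mul_measure_maximalSet_mul_card_le hf c K L

theorem mul_measure_iUnion_maximalSet_le (hf : Measurable f) (c : ℝ≥0∞) :
    c * μ (⋃ K, maximalSet (ι := ι) f c K) ≤ 5 ^ Fintype.card ι * ∫⁻ x, f x ∂μ := by
  have hmono : Monotone (maximalSet (ι := ι) f c) := fun K K' hK x ⟨N, hN, h⟩ => ⟨N, hN.trans hK, h⟩
  rw [hmono.measure_iUnion, ENNReal.mul_iSup]
  exact iSup_le (mul_measure_maximalSet_le hf c)

end Maximal

/-! ### Ergodic averages -/

theorem tendsto_of_forall_pos_exists_approx {E : Type*} [SeminormedAddCommGroup E] {a : ℕ → E}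
    {l : E} (h : ∀ ε > 0, ∃ b : ℕ → E, ∃ l', Tendsto b atTop (𝓝 l') ∧ (∀ N, ‖a N - b N‖ ≤ ε) ∧
      ‖l - l'‖ ≤ ε) : Tendsto a atTop (𝓝 l) := by
  refine Metric.tendsto_atTop.2 fun ε hε => ?_
  obtain ⟨b, l', hb, hab, hl⟩ := h (ε / 4) (by positivity)
  obtain ⟨N₀, hN₀⟩ := Metric.tendsto_atTop.1 hb (ε / 4) (by positivity)
  refine ⟨N₀, fun N hN => ?_⟩
  have hdist := dist_triangle4 (a N) (b N) l' l
  rw [dist_eq_norm (a N) (b N), dist_comm l' l, dist_eq_norm l l'] at hdist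
  linarith [hab N, hN₀ N hN]

section BanachPrinciple

variable {𝕜 : Type*} [RCLike 𝕜] {X : Type*} [AddAction (ι → ℤ) X] {f : X → 𝕜}

theorem norm_expect_sub_expect_le_of_notMem_maximalSet {g : X → 𝕜} {c : ℝ≥0} {x : X}
    (hx : x ∉ ⋃ K, maximalSet (ι := ι) (fun y => ‖f y - g y‖ₑ) c K) (N : ℕ) :
    ‖𝔼 n ∈ intBox ι N, f (n +ᵥ x) - 𝔼 n ∈ intBox ι N, g (n +ᵥ x)‖ ≤ c := by
  rw [← expect_sub_distrib]
  refine (RCLike.norm_expect_le (K := 𝕜)).trans ?_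
  have hcard : (0 : ℝ) < #(intBox ι N) := by exact_mod_cast (intBox_nonempty N).card_pos
  rw [expect_eq_sum_div_card, div_le_iff₀ hcard]
  by_contra! hlt
  refine hx (Set.mem_iUnion.2 ⟨N, N, le_rfl, ?_⟩)
  have hle : c * (#(intBox ι N) : ℝ≥0) ≤ ∑ n ∈ intBox ι N, ‖f (n +ᵥ x) - g (n +ᵥ x)‖₊ := by
    rw [← NNReal.coe_le_coe]
    push_cast
    exact hlt.le
  simpa only [enorm_eq_nnnorm] using mod_cast hle

variable [MeasurableSpace X] [MeasurableConstVAdd (ι → ℤ) X] {μ : Measure X}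
  [VAddInvariantMeasure (ι → ℤ) X μ]

theorem measure_iUnion_maximalSet_enorm_le {g : X → 𝕜} (hf : Measurable f) (hg : Measurable g)
    {c : ℝ≥0} (hc : c ≠ 0) (h : ∫⁻ x, ‖f x - g x‖ₑ ∂μ ≤ c * c) :
    μ (⋃ K, maximalSet (ι := ι) (fun y => ‖f y - g y‖ₑ) c K) ≤ 5 ^ Fintype.card ι * c := by
  have hmax := mul_measure_iUnion_maximalSet_le (ι := ι) (μ := μ) (hf.sub hg).enorm c
  have hc' : (c : ℝ≥0∞) ≠ 0 := by exact_mod_cast hc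
  refine (ENNReal.mul_le_mul_iff_right hc' ENNReal.coe_ne_top).1 (hmax.trans ?_)
  rw [mul_left_comm]
  gcongr
  exact h

/-- Banach's principle: by the maximal inequality, the integrable functions whose box averages
converge almost everywhere to their integral form a closed set in `L¹`. -/
theorem ae_tendsto_expect_of_forall_exists_approx (hf : Measurable f) (hf_int : Integrable f μ)
    (h : ∀ ε > 0, ∃ g : X → 𝕜, Measurable g ∧ Integrable g μ ∧ ∫⁻ x, ‖f x - g x‖ₑ ∂μ ≤ ε ∧
      ∀ᵐ x ∂μ, Tendsto (fun N => 𝔼 n ∈ intBox ι N, g (n +ᵥ x)) atTop (𝓝 (∫ y, g y ∂μ))) :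
    ∀ᵐ x ∂μ, Tendsto (fun N => 𝔼 n ∈ intBox ι N, f (n +ᵥ x)) atTop (𝓝 (∫ y, f y ∂μ)) := by
  have hc (k : ℕ) : (2⁻¹ ^ k : ℝ≥0) ≠ 0 := by positivity
  choose g hg hg_int hfg hg_lim using fun k : ℕ =>
    h (((2⁻¹ ^ k : ℝ≥0) : ℝ≥0∞) * (2⁻¹ ^ k : ℝ≥0)) (by positivity)
  have hsum : ∑' k, μ (⋃ K, maximalSet (ι := ι) (fun y => ‖f y - g k y‖ₑ) (2⁻¹ ^ k : ℝ≥0) K)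
      ≠ ⊤ := by
    refine ne_top_of_le_ne_top ?_ (ENNReal.tsum_le_tsum fun k =>
      measure_iUnion_maximalSet_enorm_le hf (hg k) (hc k) (hfg k))
    rw [ENNReal.tsum_mul_left]
    refine ENNReal.mul_ne_top (by simp) (ENNReal.tsum_coe_ne_top_iff_summable.2 ?_)
    exact NNReal.summable_geometric (by norm_num)
  filter_upwards [ae_eventually_notMem hsum, ae_all_iff.2 hg_lim] with x hx hx_lim
  refine tendsto_of_forall_pos_exists_approx fun ε hε => ?_
  have h_integral (k : ℕ) : ‖∫ y, f y ∂μ - ∫ y, g k y ∂μ‖ ≤ 2⁻¹ ^ k := by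
    have hle : ‖∫ y, (f y - g k y) ∂μ‖ₑ ≤ ((2⁻¹ ^ k * 2⁻¹ ^ k : ℝ≥0) : ℝ≥0∞) :=
      (enorm_integral_le_lintegral_enorm _).trans (mod_cast hfg k)
    rw [← integral_sub hf_int (hg_int k), ← coe_nnnorm]
    exact_mod_cast (ENNReal.coe_le_coe.1 hle).trans
      (mul_le_of_le_one_left' (pow_le_one₀ (by norm_num) (by norm_num)))
  have hsmall : ∀ᶠ k : ℕ in atTop, (2⁻¹ : ℝ) ^ k ≤ ε :=
    (tendsto_pow_atTop_nhds_zero_of_lt_one (by norm_num) (by norm_num)).eventually_le_const hε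
  obtain ⟨k, hxk, hkε⟩ := (hx.and hsmall).exists
  refine ⟨_, _, hx_lim k, fun N => ?_, ?_⟩
  · exact (norm_expect_sub_expect_le_of_notMem_maximalSet hxk N).trans (by simpa using hkε)
  · exact (h_integral k).trans hkε

end BanachPrinciple

/-! ### Equidistribution on the torus -/

theorem sum_Icc_neg_zpow_mul_sub_one {𝕜 : Type*} [Field 𝕜] {z : 𝕜} (hz : z ≠ 0) (N : ℕ) :
    (∑ j ∈ Finset.Icc (-N : ℤ) N, z ^ j) * (z - 1) = z ^ (N + 1 : ℤ) - z ^ (-N : ℤ) := by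
  induction N with
  | zero => simp
  | succ N ih =>
    have hpow : z ^ (-N : ℤ) = z ^ (-(N + 1) : ℤ) * z := by
      rw [← zpow_add_one₀ hz]
      congr 1
      ring
    push_cast
    rw [Icc_succ_succ, sum_union (by simp), sum_pair (by lia), add_mul, ih, hpow,
      zpow_add_one₀ hz (N + 1 : ℤ)]
    ring

theorem tendsto_expect_Icc_neg_zpow {z : ℂ} (hz : ‖z‖ = 1) :
    Tendsto (fun N : ℕ => 𝔼 j ∈ Finset.Icc (-N : ℤ) N, z ^ j) atTop
      (𝓝 (if z = 1 then 1 else 0)) := by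
  have hcard (N : ℕ) : #(Finset.Icc (-N : ℤ) N) = 2 * N + 1 := by
    rw [Int.card_Icc]
    lia
  rcases eq_or_ne z 1 with rfl | hz1
  · simp
  have hpos : 0 < ‖z - 1‖ := norm_pos_iff.2 (sub_ne_zero.2 hz1)
  have hsum (N : ℕ) : ‖∑ j ∈ Finset.Icc (-N : ℤ) N, z ^ j‖ ≤ 2 / ‖z - 1‖ := by
    rw [le_div_iff₀ hpos, ← norm_mul,
      sum_Icc_neg_zpow_mul_sub_one (norm_ne_zero_iff.1 (by simp [hz]))]
    refine (norm_sub_le _ _).trans (le_of_eq ?_)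
    rw [norm_zpow, norm_zpow, hz, _root_.one_zpow, _root_.one_zpow]
    norm_num
  have hlim : Tendsto (fun N : ℕ => 2 / ‖z - 1‖ / (2 * N + 1)) atTop (𝓝 0) :=
    tendsto_const_nhds.div_atTop <| tendsto_atTop_add_const_right _ _ <|
      tendsto_natCast_atTop_atTop.const_mul_atTop two_pos
  rw [if_neg hz1]
  refine squeeze_zero_norm (fun N => ?_) hlim
  rw [expect_eq_sum_div_card, norm_div, hcard, Complex.norm_natCast]
  push_cast
  gcongr
  exact hsum N

section Characters

theorem addChar_pi_int_apply_eq_prod_zpow (ψ : AddChar (ι → ℤ) ℂ) (n : ι → ℤ) :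
    ψ n = ∏ i, ψ (Pi.single i 1) ^ n i := by
  have hn : n = ∑ i, n i • (Pi.single i 1 : ι → ℤ) := by
    ext i
    simp [Finset.sum_apply, Pi.single_apply]
  conv_lhs => rw [hn]
  simp only [← AddChar.map_zsmul_eq_zpow]
  exact map_prod ψ.toMonoidHom (fun i => Multiplicative.ofAdd (n i • Pi.single i 1)) univ

theorem tendsto_expect_addChar {ψ : AddChar (ι → ℤ) ℂ} (hψ : ∀ n, ‖ψ n‖ = 1) :
    Tendsto (fun N => 𝔼 n ∈ intBox ι N, ψ n) atTop (𝓝 (if ψ = 0 then 1 else 0)) := by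
  have hprod (N : ℕ) : 𝔼 n ∈ intBox ι N, ψ n =
      ∏ i, 𝔼 j ∈ Finset.Icc (-N : ℤ) N, ψ (Pi.single i 1) ^ j := by
    simp only [expect_eq_sum_div_card, prod_div_distrib]
    rw [intBox_eq_piFinset, Fintype.card_piFinset, Nat.cast_prod, Finset.prod_univ_sum]
    congr 1
    exact Finset.sum_congr rfl fun n _ => addChar_pi_int_apply_eq_prod_zpow ψ n
  have hlim := tendsto_finsetProd Finset.univ fun i _ =>
    tendsto_expect_Icc_neg_zpow (hψ (Pi.single i 1))
  have hzero : ψ = 0 ↔ ∀ i, ψ (Pi.single i 1) = 1 := by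
    refine ⟨fun h i => by simp [h], fun h => DFunLike.ext _ _ fun n => ?_⟩
    simp [addChar_pi_int_apply_eq_prod_zpow ψ n, h]
  simp only [hprod, hzero]
  convert hlim using 2
  rw [prod_ite_zero]
  simp

theorem integral_addChar_eq_zero {G : Type*} [AddGroup G] [MeasurableSpace G] [MeasurableAdd G]
    {μ : Measure G} [μ.IsAddLeftInvariant] {ψ : AddChar G ℂ} {y : G} (hy : ψ y ≠ 1) :
    ∫ x, ψ x ∂μ = 0 := by
  have h : ψ y * ∫ x, ψ x ∂μ = ∫ x, ψ x ∂μ := by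
    rw [← integral_const_mul, ← integral_add_left_eq_self ψ y]
    simp only [AddChar.map_add_eq_mul]
  by_contra h0
  exact hy (mul_eq_right₀ h0 |>.1 h)

end Characters

section Torus

open UnitAddTorus

variable {κ : Type*} [Fintype κ]

/-- The monomial `mFourier k`, as a character of the torus. -/
def mFourierChar (k : κ → ℤ) : AddChar (UnitAddTorus κ) ℂ where
  toFun := mFourier k
  map_zero_eq_one' := by simp [mFourier]
  map_add_eq_mul' x y := by
    simp [mFourier, fourier_apply, AddCircle.toCircle_add, prod_mul_distrib]

theorem norm_mFourierChar (k : κ → ℤ) (x : UnitAddTorus κ) : ‖mFourierChar k x‖ = 1 := by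
  simp only [mFourierChar, mFourier, fourier_apply, AddChar.coe_mk, ContinuousMap.coe_mk, norm_prod,
    Circle.norm_coe, prod_const_one]

variable {μ : Measure (UnitAddTorus κ)} [IsProbabilityMeasure μ] [μ.IsAddLeftInvariant]
  {a : (ι → ℤ) →+ UnitAddTorus κ}

theorem tendsto_expect_mFourier (ha : ∀ k, (mFourierChar k).compAddMonoidHom a = 0 → k = 0)
    (k : κ → ℤ) (x : UnitAddTorus κ) :
    Tendsto (fun N => 𝔼 n ∈ intBox ι N, mFourier k (a n + x)) atTop (𝓝 (∫ y, mFourier k y ∂μ)) := by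
  have hmul (N : ℕ) : 𝔼 n ∈ intBox ι N, mFourier k (a n + x) =
      (𝔼 n ∈ intBox ι N, (mFourierChar k).compAddMonoidHom a n) * mFourierChar k x := by
    simp only [expect_mul, AddChar.compAddMonoidHom_apply, ← AddChar.map_add_eq_mul]
    rfl
  simp only [hmul]
  convert (tendsto_expect_addChar (ψ := (mFourierChar k).compAddMonoidHom a)
    fun n => norm_mFourierChar k (a n)).mul_const _ using 2
  split_ifs with h
  · simp [ha k h, mFourierChar, mFourier_zero]
  · obtain ⟨n, hn⟩ := AddChar.ne_one_iff.1 h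
    rw [zero_mul]
    exact integral_addChar_eq_zero (ψ := mFourierChar k) hn

theorem tendsto_expect_of_continuous (ha : ∀ k, (mFourierChar k).compAddMonoidHom a = 0 → k = 0)
    (f : C(UnitAddTorus κ, ℂ)) (x : UnitAddTorus κ) :
    Tendsto (fun N => 𝔼 n ∈ intBox ι N, f (a n + x)) atTop (𝓝 (∫ y, f y ∂μ)) := by
  have h_int (g : C(UnitAddTorus κ, ℂ)) : Integrable g μ :=
    g.continuous.integrable_of_hasCompactSupport (.of_compactSpace _)
  have h_span : ∀ p ∈ Submodule.span ℂ (Set.range (mFourier (d := κ))),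
      Tendsto (fun N => 𝔼 n ∈ intBox ι N, p (a n + x)) atTop (𝓝 (∫ y, p y ∂μ)) := by
    intro p hp
    induction hp using Submodule.span_induction with
    | mem _ h =>
      obtain ⟨k, rfl⟩ := h
      exact tendsto_expect_mFourier (μ := μ) ha k x
    | zero => simp
    | add p q _ _ hp hq =>
      simpa [expect_add_distrib, integral_add (h_int p) (h_int q)] using hp.add hq
    | smul c p _ hp => simpa [← mul_expect, integral_const_mul] using hp.const_mul c
  refine tendsto_of_forall_pos_exists_approx fun ε hε => ?_
  have hf : f ∈ (Submodule.span ℂ (Set.range (mFourier (d := κ)))).topologicalClosure :=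
    by simp [span_mFourier_closure_eq_top]
  obtain ⟨p, hp, hfp⟩ := Metric.mem_closure_iff.1 hf ε hε
  have hle (y : UnitAddTorus κ) : ‖f y - p y‖ ≤ ε :=
    ((f - p).norm_coe_le_norm y).trans ((dist_eq_norm f p).symm.trans_le hfp.le)
  refine ⟨_, _, h_span p hp, fun N => ?_, ?_⟩
  · rw [← expect_sub_distrib]
    exact (RCLike.norm_expect_le (K := ℂ)).trans (expect_le (intBox_nonempty N) fun n _ => hle _)
  · rw [← integral_sub (h_int f) (h_int p)]
    simpa using norm_integral_le_of_norm_le_const (μ := μ) (.of_forall hle)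

theorem ae_tendsto_expect_torus (ha : ∀ k, (mFourierChar k).compAddMonoidHom a = 0 → k = 0)
    {f : UnitAddTorus κ → ℝ} (hf : Measurable f) (hf_int : Integrable f μ) :
    ∀ᵐ x ∂μ, Tendsto (fun N => 𝔼 n ∈ intBox ι N, f (a n + x)) atTop (𝓝 (∫ y, f y ∂μ)) := by
  let _ : AddAction (ι → ℤ) (UnitAddTorus κ) := AddAction.compHom _ a
  have : MeasurableConstVAdd (ι → ℤ) (UnitAddTorus κ) := ⟨fun n => measurable_const_add (a n)⟩
  have : VAddInvariantMeasure (ι → ℤ) (UnitAddTorus κ) μ :=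
    ⟨fun n s _ => measure_preimage_add μ (a n) s⟩
  refine ae_tendsto_expect_of_forall_exists_approx hf hf_int fun ε hε => ?_
  obtain ⟨g, -, hfg, hg, hg_int⟩ := hf_int.exists_hasCompactSupport_lintegral_sub_le hε.ne'
  refine ⟨g, hg.measurable, hg_int, hfg, .of_forall fun x => ?_⟩
  have h := tendsto_expect_of_continuous (μ := μ) ha ⟨_, Complex.continuous_ofReal.comp hg⟩ x
  simp only [ContinuousMap.coe_mk, Function.comp_apply, ← Complex.ofReal_expect,
    integral_complex_ofReal] at h
  exact tendsto_ofReal_iff.1 h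

end Torus

/-! ### Periodization -/

theorem integrable_tsum {α β : Type*} [MeasurableSpace α] {μ : Measure α} [Countable β]
    {f : β → α → ℝ} (hf : ∀ i, AEStronglyMeasurable (f i) μ)
    (h : ∑' i, ∫⁻ x, ‖f i x‖ₑ ∂μ ≠ ∞) : Integrable (fun x => ∑' i, f i x) μ := by
  refine ⟨(AEMeasurable.tsum fun i => (hf i).aemeasurable).aestronglyMeasurable, ?_⟩
  refine (lintegral_mono fun x => enorm_tsum_le_tsum_enorm).trans_lt ?_
  rw [lintegral_tsum fun i => (hf i).enorm]
  exact h.lt_top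

section Periodization

variable {κ : Type*}

/-- The inclusion `ℤ^κ → ℝ^κ`. -/
def intVec (κ : Type*) : (κ → ℤ) →+ (κ → ℝ) := (Int.castAddHom ℝ).compLeft κ

/-- The quotient map `ℝ^κ → ℝ^κ / ℤ^κ`. -/
def toTorus (κ : Type*) : (κ → ℝ) →+ UnitAddTorus κ :=
  (QuotientAddGroup.mk' (AddSubgroup.zmultiples (1 : ℝ))).compLeft κ

/-- The fundamental domain `(0, 1]^κ` of `ℤ^κ` in `ℝ^κ`; the half-open side is the one of
`AddCircle.measurableEquivIoc`. -/
def unitCube (κ : Type*) : Set (κ → ℝ) := Set.univ.pi fun _ => Set.Ioc 0 1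

theorem intVec_injective : Function.Injective (intVec κ) :=
  fun _ _ h => funext fun i => Int.cast_injective (congr_fun h i)

theorem exists_intVec_eq_of_toTorus_eq_zero {w : κ → ℝ} (h : toTorus κ w = 0) :
    ∃ p, intVec κ p = w := by
  choose p hp using fun i => (AddCircle.coe_eq_zero_iff 1).1 (congr_fun h i)
  exact ⟨p, funext fun i => by simpa [intVec] using hp i⟩

/-- A measurable section of `toTorus`, with values in `unitCube`. -/
def torusLift (x : UnitAddTorus κ) : κ → ℝ := fun i => AddCircle.measurableEquivIoc 1 0 (x i)

theorem measurable_torusLift : Measurable (torusLift (κ := κ)) :=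
  measurable_pi_lambda _ fun i =>
    measurable_subtype_coe.comp <|
      (AddCircle.measurableEquivIoc 1 0).measurable.comp (measurable_pi_apply i)

theorem toTorus_torusLift (x : UnitAddTorus κ) : toTorus κ (torusLift x) = x :=
  funext fun _ => AddCircle.coe_equivIoc

theorem apply_torusLift_toTorus {β : Type*} {φ : (κ → ℝ) → β}
    (hφ : ∀ p w, φ (intVec κ p + w) = φ w) (w : κ → ℝ) : φ (torusLift (toTorus κ w)) = φ w := by
  obtain ⟨p, hp⟩ := exists_intVec_eq_of_toTorus_eq_zero (w := torusLift (toTorus κ w) - w)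
    (by rw [map_sub, toTorus_torusLift, sub_self])
  rw [← sub_add_cancel (torusLift (toTorus κ w)) w, ← hp, hφ]

theorem measurableSet_unitCube [Countable κ] : MeasurableSet (unitCube κ) :=
  .univ_pi fun _ => measurableSet_Ioc

instance countable_range_intVec [Finite κ] : Countable (intVec κ).range :=
  (AddMonoidHom.ofInjective intVec_injective).surjective.countable

variable [Fintype κ]

theorem measurePreserving_toTorus :
    MeasurePreserving (toTorus κ) (volume.restrict (unitCube κ)) volume := by
  have h := measurePreserving_pi _ _ fun _ : κ => UnitAddCircle.measurePreserving_mk 0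
  rw [← Measure.restrict_pi_pi, zero_add] at h
  exact h

theorem isAddFundamentalDomain_unitCube :
    IsAddFundamentalDomain (intVec κ).range (unitCube κ) := by
  refine .mk' measurableSet_unitCube.nullMeasurableSet fun w => ?_
  have mem_iff (p : κ → ℤ) : intVec κ p + w ∈ unitCube κ ↔
      ∀ i, w i + p i • (1 : ℝ) ∈ Set.Ioc 0 (0 + 1) := by
    simp [unitCube, intVec, add_comm (w _)]
  choose p hp hp_unique using fun i => existsUnique_add_zsmul_mem_Ioc (one_pos (α := ℝ)) (w i) 0
  refine ⟨⟨intVec κ p, p, rfl⟩, (mem_iff p).2 hp, ?_⟩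
  rintro ⟨_, m, rfl⟩ hm
  simp only [funext fun i => hp_unique i (m i) ((mem_iff m).1 hm i)]

theorem tsum_setLIntegral_intVec_add (f : (κ → ℝ) → ℝ≥0∞) :
    ∑' p, ∫⁻ w in unitCube κ, f (intVec κ p + w) = ∫⁻ w, f w := by
  rw [isAddFundamentalDomain_unitCube.lintegral_eq_tsum'',
    ← (AddMonoidHom.ofInjective intVec_injective).toEquiv.tsum_eq]
  rfl

theorem tsum_setIntegral_intVec_add {f : (κ → ℝ) → ℝ} (hf : Integrable f) :
    ∑' p, ∫ w in unitCube κ, f (intVec κ p + w) = ∫ w, f w := by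
  rw [isAddFundamentalDomain_unitCube.integral_eq_tsum'' _ hf,
    ← (AddMonoidHom.ofInjective intVec_injective).toEquiv.tsum_eq]
  rfl

theorem ae_of_ae_restrict_unitCube {P : (κ → ℝ) → Prop} (hP : ∀ p w, P w → P (intVec κ p + w))
    (h : ∀ᵐ w ∂volume.restrict (unitCube κ), P w) : ∀ᵐ w, P w := by
  have hP_iff (p : κ → ℤ) (w : κ → ℝ) : P (intVec κ p + w) ↔ P w :=
    ⟨fun h => by simpa [← add_assoc, ← map_add] using hP (-p) _ h, hP p w⟩
  refine isAddFundamentalDomain_unitCube.measure_zero_of_invariant _ ?_ ?_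
  · rintro ⟨_, p, rfl⟩
    ext w
    have := hP_iff (-p) w
    rw [Set.mem_vadd_set_iff_neg_vadd_mem]
    rw [map_neg] at this
    exact not_congr this
  · rwa [← Measure.restrict_apply' measurableSet_unitCube]

theorem mFourierChar_toTorus (k : κ → ℤ) (w : κ → ℝ) :
    mFourierChar k (toTorus κ w) = AddCircle.toCircle ((intVec κ k ⬝ᵥ w : ℝ) : UnitAddCircle) := by
  have h : ((intVec κ k ⬝ᵥ w : ℝ) : UnitAddCircle) = ∑ i, k i • toTorus κ w i := by
    simp [dotProduct, intVec, toTorus, ← zsmul_eq_mul]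
  rw [h]
  exact (map_prod (Circle.coeHom.comp AddCircle.toCircle_addChar.toMonoidHom)
    (fun i => Multiplicative.ofAdd (k i • toTorus κ w i)) univ).symm

theorem eq_zero_of_compAddMonoidHom_toTorus_eq_zero {G : Type*} [AddMonoid G] {a : G →+ (κ → ℝ)}
    (ha : ∀ k : κ → ℤ, (∀ n, ∃ m : ℤ, intVec κ k ⬝ᵥ a n = m) → k = 0) (k : κ → ℤ)
    (hk : (mFourierChar k).compAddMonoidHom ((toTorus κ).comp a) = 0) : k = 0 := by
  refine ha k fun n => ?_
  have hn : AddCircle.toCircle ((intVec κ k ⬝ᵥ a n : ℝ) : UnitAddCircle) = 1 :=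
    Circle.coe_eq_one.1 <| (mFourierChar_toTorus k (a n)).symm.trans (DFunLike.congr_fun hk n)
  rw [← AddCircle.toCircle_zero, (AddCircle.injective_toCircle one_ne_zero).eq_iff,
    AddCircle.coe_eq_zero_iff] at hn
  obtain ⟨m, hm⟩ := hn
  exact ⟨m, by rw [← hm, zsmul_one]⟩

variable {a : (ι → ℤ) →+ (κ → ℝ)}

instance isProbabilityMeasure_volume_unitAddTorus :
    IsProbabilityMeasure (volume : Measure (UnitAddTorus κ)) :=
  have : IsProbabilityMeasure (volume : Measure UnitAddCircle) := ⟨UnitAddCircle.measure_univ⟩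
  inferInstanceAs (IsProbabilityMeasure (Measure.pi fun _ => (volume : Measure UnitAddCircle)))

theorem ae_tendsto_expect_of_periodic
    (ha : ∀ k : κ → ℤ, (∀ n, ∃ m : ℤ, intVec κ k ⬝ᵥ a n = m) → k = 0) {φ : (κ → ℝ) → ℝ}
    (hφ : Measurable φ) (hφ_int : IntegrableOn φ (unitCube κ))
    (hφ_per : ∀ p w, φ (intVec κ p + w) = φ w) :
    ∀ᵐ w, Tendsto (fun N => 𝔼 n ∈ intBox ι N, φ (a n + w)) atTop
      (𝓝 (∫ w in unitCube κ, φ w)) := by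
  have hf := hφ.comp measurable_torusLift
  have hφ_lift : (φ ∘ torusLift) ∘ toTorus κ = φ := funext (apply_torusLift_toTorus hφ_per)
  have hf_int : Integrable (φ ∘ torusLift) volume := by
    rwa [← measurePreserving_toTorus.integrable_comp hf.aestronglyMeasurable, hφ_lift]
  have hf_integral : ∫ x, (φ ∘ torusLift) x = ∫ w in unitCube κ, φ w := by
    rw [← measurePreserving_toTorus.map_eq,
      integral_map measurePreserving_toTorus.aemeasurable hf.aestronglyMeasurable]
    exact congr_arg (integral _) hφ_lift
  refine ae_of_ae_restrict_unitCube (fun p w h => ?_) ?_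
  · simpa only [add_left_comm _ (intVec κ p) w, hφ_per] using h
  · filter_upwards [measurePreserving_toTorus.quasiMeasurePreserving.ae <|
      ae_tendsto_expect_torus (eq_zero_of_compAddMonoidHom_toTorus_eq_zero ha) hf hf_int] with w hw
    simpa only [AddMonoidHom.comp_apply, ← map_add, Function.comp_apply,
      apply_torusLift_toTorus hφ_per, ← hf_integral] using hw

theorem ae_tendsto_expect_tsum
    (ha : ∀ k : κ → ℤ, (∀ n, ∃ m : ℤ, intVec κ k ⬝ᵥ a n = m) → k = 0) {f : (κ → ℝ) → ℝ}
    (hf : Measurable f) (hf_int : Integrable f) :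
    ∀ᵐ w, (∀ n, Summable fun p => f (intVec κ p + (a n + w))) ∧
      Tendsto (fun N => 𝔼 n ∈ intBox ι N, ∑' p, f (intVec κ p + (a n + w))) atTop
        (𝓝 (∫ w, f w)) := by
  have hf_add (p : κ → ℤ) : Measurable fun w => f (intVec κ p + w) :=
    hf.comp (measurable_const_add _)
  have h_lintegral : ∑' p, ∫⁻ w in unitCube κ, ‖f (intVec κ p + w)‖ₑ ≠ ∞ :=
    (tsum_setLIntegral_intVec_add (‖f ·‖ₑ)).trans_lt hf_int.2 |>.ne
  have h_shift (m p : κ → ℤ) (w : κ → ℝ) :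
      f (intVec κ p + (intVec κ m + w)) = f (intVec κ (Equiv.addRight m p) + w) := by
    simp [add_assoc]
  have h_summable : ∀ᵐ w, Summable fun p => f (intVec κ p + w) := by
    refine ae_of_ae_restrict_unitCube (fun m w h => ?_) ?_
    · simpa only [h_shift, Function.comp_def] using (Equiv.addRight m).summable_iff.2 h
    · simp only [← eLpNorm_one_eq_lintegral_enorm] at h_lintegral
      exact (summable_norm_of_tsum_eLpNorm_ne_top le_rfl
        (fun p => (hf_add p).aestronglyMeasurable) h_lintegral).mono fun w => Summable.of_norm
  have h_tendsto := ae_tendsto_expect_of_periodic ha (.tsum hf_add)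
    (integrable_tsum (fun p => (hf_add p).aestronglyMeasurable) h_lintegral)
    (fun m w => by
      simpa only [h_shift] using (Equiv.addRight m).tsum_eq fun p => f (intVec κ p + w))
  rw [integral_tsum (fun p => (hf_add p).aestronglyMeasurable) h_lintegral,
    tsum_setIntegral_intVec_add hf_int] at h_tendsto
  exact (ae_all_iff.2 fun n =>
    (measurePreserving_add_left volume (a n)).quasiMeasurePreserving.ae h_summable).and h_tendsto

end Periodization

/-! ### Two lattices and a moiré lattice -/

theorem measurable_mulVec {κ : Type*} [Fintype κ] (A : Matrix κ κ ℝ) :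
    Measurable fun x => A *ᵥ x :=
  (Continuous.matrix_mulVec continuous_const continuous_id).measurable

section MulVec

variable {A : Matrix ι ι ℝ}

theorem map_mulVec_volume (hA : IsUnit A.det) :
    Measure.map (fun x => A *ᵥ x) volume = ENNReal.ofReal |A.det|⁻¹ • volume := by
  rw [← abs_inv]
  exact Real.map_matrix_volume_pi_eq_smul_volume_pi hA.ne_zero

theorem quasiMeasurePreserving_mulVec (hA : IsUnit A.det) :
    Measure.QuasiMeasurePreserving fun x : ι → ℝ => A *ᵥ x :=
  ⟨measurable_mulVec A, map_mulVec_volume hA ▸ Measure.smul_absolutelyContinuous⟩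

theorem integral_comp_mulVec (hA : IsUnit A.det) {f : (ι → ℝ) → ℝ} (hf : Measurable f) :
    ∫ x, f (A *ᵥ x) = |A.det|⁻¹ * ∫ x, f x := by
  rw [← integral_map (measurable_mulVec A).aemeasurable hf.aestronglyMeasurable,
    map_mulVec_volume hA, integral_smul_measure, ENNReal.toReal_ofReal (by positivity), smul_eq_mul]

theorem integrable_comp_mulVec_iff (hA : IsUnit A.det) {f : (ι → ℝ) → ℝ} (hf : Measurable f) :
    Integrable (fun x => f (A *ᵥ x)) ↔ Integrable f := by
  have h_pos : 0 < |A.det|⁻¹ := inv_pos.2 (abs_pos.2 hA.ne_zero)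
  refine (integrable_map_measure hf.aestronglyMeasurable
    (measurable_mulVec A).aemeasurable).symm.trans ?_
  rw [map_mulVec_volume hA,
    integrable_smul_measure (ENNReal.ofReal_pos.2 h_pos).ne' ENNReal.ofReal_ne_top]

theorem ae_tendsto_expect_tsum_mulVec {κ : Type*} [Fintype κ] [DecidableEq κ] {M : Matrix κ κ ℝ}
    (hM : IsUnit M.det) {a : (ι → ℤ) →+ (κ → ℝ)}
    (ha : ∀ k : κ → ℤ, (∀ n, ∃ m : ℤ, intVec κ k ⬝ᵥ M⁻¹ *ᵥ a n = m) → k = 0)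
    {f : (κ → ℝ) → ℝ} (hf : Measurable f) (hf_int : Integrable f) :
    ∀ᵐ x, (∀ n, Summable fun p => f (M *ᵥ intVec κ p + (a n + x))) ∧
      Tendsto (fun N => 𝔼 n ∈ intBox ι N, ∑' p, f (M *ᵥ intVec κ p + (a n + x))) atTop
        (𝓝 (|M.det|⁻¹ * ∫ x, f x)) := by
  have h := ae_tendsto_expect_tsum (a := (M⁻¹).mulVecLin.toAddMonoidHom.comp a) ha
    (hf.comp (measurable_mulVec M)) ((integrable_comp_mulVec_iff hM hf).2 hf_int)
  have hM_inv : IsUnit (M⁻¹).det := Matrix.isUnit_nonsing_inv_det M hM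
  filter_upwards [(quasiMeasurePreserving_mulVec hM_inv).ae h] with x hx
  rw [← integral_comp_mulVec hM hf]
  simpa [Matrix.mulVec_add, Matrix.mul_nonsing_inv M hM] using hx

end MulVec

theorem ae_prod_of_forall_ae_shear {G H : Type*} [MeasurableSpace G] [MeasurableSpace H]
    [AddGroup H] [MeasurableAdd₂ H] {μ : Measure G} {ν : Measure H} [SFinite μ] [SFinite ν]
    [ν.IsAddRightInvariant] {s : Set (G × H)} (hs : MeasurableSet s) {B : G → H} (hB : Measurable B)
    (h : ∀ c, ∀ᵐ x ∂μ, (x, c + B x) ∈ s) : ∀ᵐ z ∂μ.prod ν, z ∈ s := by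
  have h_meas : MeasurableSet {z : H × G | (z.2, z.1 + B z.2) ∈ s} :=
    hs.preimage (measurable_snd.prodMk (measurable_fst.add (hB.comp measurable_snd)))
  refine (Measure.ae_prod_iff_ae_ae hs).2 ?_
  have h_comm : ∀ᵐ x ∂μ, ∀ᵐ c ∂ν, (x, c + B x) ∈ s :=
    (Measure.ae_ae_comm (p := fun c x => (x, c + B x) ∈ s) h_meas).1 (.of_forall h)
  filter_upwards [h_comm] with x hx
  change ∀ᵐ y ∂ν, (x, y) ∈ s
  simpa using (measurePreserving_add_right ν (-B x)).quasiMeasurePreserving.ae hx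

theorem measurable_integral_comp_mulVec_add {κ : Type*} [Fintype κ] {A₁ A₂ : Matrix κ κ ℝ}
    {g : (κ → ℝ) → (κ → ℝ) → ℝ} (hg : Measurable (Function.uncurry g)) :
    Measurable fun γ : (κ → ℝ) × (κ → ℝ) => ∫ ξ, g (A₁ *ᵥ ξ + γ.1) (A₂ *ᵥ ξ + γ.2) := by
  have h_meas : Measurable fun z : ((κ → ℝ) × (κ → ℝ)) × (κ → ℝ) =>
      g (A₁ *ᵥ z.2 + z.1.1) (A₂ *ᵥ z.2 + z.1.2) :=
    hg.comp <| (((measurable_mulVec A₁).comp measurable_snd).add measurable_fst.fst).prodMk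
      (((measurable_mulVec A₂).comp measurable_snd).add measurable_fst.snd)
  exact h_meas.stronglyMeasurable.integral_prod_right'.measurable

/-- Two lattices `A₁ ℤ^ι` and `A₂ ℤ^ι` whose reciprocal lattices intersect only in zero, together
with their moiré lattice `M ℤ^ι`, characterised by `M⁻ᵀ = A₁⁻ᵀ - A₂⁻ᵀ`. -/
structure IsMoireBilayer (A₁ A₂ M : Matrix ι ι ℝ) : Prop where
  isUnit_det_left : IsUnit A₁.det
  isUnit_det_right : IsUnit A₂.det
  isUnit_det_moire : IsUnit M.det
  inv_moire : M⁻¹ = A₁⁻¹ - A₂⁻¹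
  incommensurate (k m : ι → ℤ) :
    (A₁⁻¹)ᵀ *ᵥ intVec ι k = (A₂⁻¹)ᵀ *ᵥ intVec ι m → k = 0 ∧ m = 0

namespace IsMoireBilayer

variable {A₁ A₂ M : Matrix ι ι ℝ}

theorem symm (h : IsMoireBilayer A₁ A₂ M) : IsMoireBilayer A₂ A₁ (-M) where
  isUnit_det_left := h.isUnit_det_right
  isUnit_det_right := h.isUnit_det_left
  isUnit_det_moire := by
    rw [Matrix.det_neg]
    exact ((isUnit_one.neg).pow _).mul h.isUnit_det_moire
  inv_moire := by
    rw [← neg_sub, ← h.inv_moire]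
    exact Matrix.inv_eq_left_inv (by rw [neg_mul_neg, Matrix.nonsing_inv_mul _ h.isUnit_det_moire])
  incommensurate k m hkm := (h.incommensurate m k hkm.symm).symm

theorem mul_inv_mul_moire (h : IsMoireBilayer A₁ A₂ M) : A₂ * A₁⁻¹ * M = M + A₂ := by
  have h_inv : A₁⁻¹ = M⁻¹ + A₂⁻¹ := by rw [h.inv_moire, sub_add_cancel]
  rw [h_inv, Matrix.mul_add, Matrix.mul_nonsing_inv _ h.isUnit_det_right, Matrix.add_mul,
    Matrix.nonsing_inv_mul_cancel_right _ _ h.isUnit_det_moire, Matrix.one_mul, add_comm]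

theorem isUnit_det_sub (h : IsMoireBilayer A₁ A₂ M) : IsUnit (A₁ - A₂).det := by
  have h_eq : A₁ - A₂ = -(A₁ * M⁻¹ * A₂) := by
    rw [h.inv_moire, Matrix.mul_sub, Matrix.mul_nonsing_inv _ h.isUnit_det_left, Matrix.sub_mul,
      Matrix.nonsing_inv_mul_cancel_right _ _ h.isUnit_det_right, Matrix.one_mul, neg_sub]
  rw [h_eq, Matrix.det_neg, Matrix.det_mul, Matrix.det_mul]
  exact ((isUnit_one.neg).pow _).mul ((h.isUnit_det_left.mul
    (Matrix.isUnit_nonsing_inv_det _ h.isUnit_det_moire)).mul h.isUnit_det_right)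

theorem eq_zero_of_forall_dotProduct_eq_intCast (h : IsMoireBilayer A₁ A₂ M) {k : ι → ℤ}
    (hk : ∀ n, ∃ m : ℤ, intVec ι k ⬝ᵥ M⁻¹ *ᵥ (A₁ *ᵥ intVec ι n) = m) : k = 0 := by
  choose j hj using fun i => hk (Pi.single i 1)
  have h_row : (1 - A₂⁻¹ * A₁)ᵀ *ᵥ intVec ι k = intVec ι j := by
    ext i
    have h_single : intVec ι (Pi.single i 1) = Pi.single i 1 := by
      ext l
      rcases eq_or_ne l i with rfl | hl <;> simp [intVec, *]
    have h_mul : (1 - A₂⁻¹ * A₁) = M⁻¹ * A₁ := by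
      rw [h.inv_moire, Matrix.sub_mul, Matrix.nonsing_inv_mul _ h.isUnit_det_left]
    have h_entry := hj i
    rw [h_single, Matrix.mulVec_mulVec, ← h_mul, Matrix.dotProduct_mulVec,
      dotProduct_single_one] at h_entry
    rw [Matrix.mulVec_transpose]
    exact h_entry
  refine (h.incommensurate (k - j) k ?_).2
  rw [map_sub, ← h_row, Matrix.transpose_sub, Matrix.transpose_one, Matrix.sub_mulVec,
    Matrix.one_mulVec, sub_sub_cancel, Matrix.mulVec_mulVec, Matrix.transpose_mul,
    ← Matrix.mul_assoc, ← Matrix.transpose_mul, Matrix.mul_nonsing_inv _ h.isUnit_det_left,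
    Matrix.transpose_one, Matrix.one_mul]

theorem integral_slice (hA₁ : IsUnit A₁.det)
    {g : (ι → ℝ) → (ι → ℝ) → ℝ} (hg : Measurable (Function.uncurry g)) (c x : ι → ℝ) :
    ∫ z, g z (c + (A₂ * A₁⁻¹) *ᵥ z) =
      |A₁.det| * ∫ ξ, g (A₁ *ᵥ ξ + x) (A₂ *ᵥ ξ + (c + (A₂ * A₁⁻¹) *ᵥ x)) := by
  set f : (ι → ℝ) → ℝ := fun z => g z (c + (A₂ * A₁⁻¹) *ᵥ z)
  have h_meas : Measurable f := hg.comp (measurable_id.prodMk ((measurable_mulVec _).const_add c))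
  have h_slice (ξ) : g (A₁ *ᵥ ξ + x) (A₂ *ᵥ ξ + (c + (A₂ * A₁⁻¹) *ᵥ x)) = f (A₁ *ᵥ ξ + x) := by
    simp only [f, Matrix.mulVec_add, Matrix.mulVec_mulVec,
      Matrix.nonsing_inv_mul_cancel_right _ _ hA₁, add_left_comm]
  simp_rw [h_slice]
  rw [integral_comp_mulVec hA₁ (f := fun z => f (z + x)) (h_meas.comp (measurable_id.add_const x)),
    integral_add_right_eq_self f x, mul_inv_cancel_left₀ (abs_ne_zero.2 hA₁.ne_zero)]

theorem integrable_slice (hA₁ : IsUnit A₁.det) {g : (ι → ℝ) → (ι → ℝ) → ℝ}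
    (hg : Measurable (Function.uncurry g)) {c : ι → ℝ}
    (hg_int : Integrable fun ξ => g (A₁ *ᵥ ξ) (A₂ *ᵥ ξ + c)) :
    Integrable fun z => g z (c + (A₂ * A₁⁻¹) *ᵥ z) := by
  refine (integrable_comp_mulVec_iff hA₁
    (hg.comp (measurable_id.prodMk ((measurable_mulVec _).const_add c)))).1 ?_
  simpa [Matrix.nonsing_inv_mul_cancel_right _ _ hA₁, add_comm c] using hg_int

theorem slice_eq (h : IsMoireBilayer A₁ A₂ M) {g : (ι → ℝ) → (ι → ℝ) → ℝ}
    (hg_per : ∀ x y m, g (x + M *ᵥ intVec ι m) (y + M *ᵥ intVec ι m) = g x y)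
    (c x : ι → ℝ) (n p : ι → ℤ) :
    g (M *ᵥ intVec ι p + (A₁ *ᵥ intVec ι n + x))
        (c + (A₂ * A₁⁻¹) *ᵥ (M *ᵥ intVec ι p + (A₁ *ᵥ intVec ι n + x))) =
      g (A₁ *ᵥ intVec ι n + x) (A₂ *ᵥ intVec ι (p + n) + (c + (A₂ * A₁⁻¹) *ᵥ x)) := by
  rw [← hg_per (A₁ *ᵥ intVec ι n + x) _ p, Matrix.mulVec_add, Matrix.mulVec_add,
    Matrix.mulVec_mulVec, Matrix.mulVec_mulVec, h.mul_inv_mul_moire,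
    Matrix.nonsing_inv_mul_cancel_right _ _ h.isUnit_det_left, Matrix.add_mulVec, map_add,
    Matrix.mulVec_add]
  congr 1 <;> abel

theorem ae_tendsto_expect_tsum_slice (h : IsMoireBilayer A₁ A₂ M) {g : (ι → ℝ) → (ι → ℝ) → ℝ}
    (hg : Measurable (Function.uncurry g))
    (hg_per : ∀ x y m, g (x + M *ᵥ intVec ι m) (y + M *ᵥ intVec ι m) = g x y) {c : ι → ℝ}
    (hg_int : Integrable fun ξ => g (A₁ *ᵥ ξ) (A₂ *ᵥ ξ + c)) :
    ∀ᵐ x, (∀ n, Summable fun p =>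
        g (A₁ *ᵥ intVec ι n + x) (A₂ *ᵥ intVec ι p + (c + (A₂ * A₁⁻¹) *ᵥ x))) ∧
      Tendsto (fun N => 𝔼 n ∈ intBox ι N, ∑' p,
        g (A₁ *ᵥ intVec ι n + x) (A₂ *ᵥ intVec ι p + (c + (A₂ * A₁⁻¹) *ᵥ x))) atTop
        (𝓝 (|A₁.det| * |M.det|⁻¹ *
          ∫ ξ, g (A₁ *ᵥ ξ + x) (A₂ *ᵥ ξ + (c + (A₂ * A₁⁻¹) *ᵥ x)))) := by
  filter_upwards [ae_tendsto_expect_tsum_mulVec h.isUnit_det_moire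
    (a := A₁.mulVecLin.toAddMonoidHom.comp (intVec ι))
    (fun k hk => h.eq_zero_of_forall_dotProduct_eq_intCast hk)
    (hg.comp (measurable_id.prodMk ((measurable_mulVec _).const_add c)))
    (integrable_slice h.isUnit_det_left hg hg_int)] with x hx
  have h_slice (n p) := h.slice_eq hg_per c x n p
  have h_tsum (n) := (Equiv.addRight n).tsum_eq fun p =>
    g (A₁ *ᵥ intVec ι n + x) (A₂ *ᵥ intVec ι p + (c + (A₂ * A₁⁻¹) *ᵥ x))
  have h_summable (n) := (Equiv.addRight n).summable_iff (f := fun p =>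
    g (A₁ *ᵥ intVec ι n + x) (A₂ *ᵥ intVec ι p + (c + (A₂ * A₁⁻¹) *ᵥ x)))
  simp only [Function.comp_def, Function.uncurry_apply_pair, id, AddMonoidHom.comp_apply,
    LinearMap.toAddMonoidHom_coe, Matrix.mulVecLin_apply, h_slice,
    integral_slice h.isUnit_det_left hg c x] at hx
  simp only [Function.comp_def, Equiv.coe_addRight] at h_tsum h_summable
  simp only [h_tsum, h_summable] at hx
  rw [mul_comm |A₁.det|, mul_assoc]
  exact hx

theorem measurableSet_setOf_summable_and_tendsto {g : (ι → ℝ) → (ι → ℝ) → ℝ}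
    (hg : Measurable (Function.uncurry g)) (C : ℝ) :
    MeasurableSet {γ : (ι → ℝ) × (ι → ℝ) |
      (∀ n, Summable fun p => g (A₁ *ᵥ intVec ι n + γ.1) (A₂ *ᵥ intVec ι p + γ.2)) ∧
      Tendsto (fun N => 𝔼 n ∈ intBox ι N, ∑' p,
        g (A₁ *ᵥ intVec ι n + γ.1) (A₂ *ᵥ intVec ι p + γ.2)) atTop
        (𝓝 (C * ∫ ξ, g (A₁ *ᵥ ξ + γ.1) (A₂ *ᵥ ξ + γ.2)))} := by
  have h_meas (n p : ι → ℤ) : Measurable fun γ : (ι → ℝ) × (ι → ℝ) =>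
      g (A₁ *ᵥ intVec ι n + γ.1) (A₂ *ᵥ intVec ι p + γ.2) :=
    hg.comp ((measurable_fst.const_add _).prodMk (measurable_snd.const_add _))
  rw [Set.ofPred_and, Set.ofPred_forall]
  refine (MeasurableSet.iInter fun n => ?_).inter (measurableSet_tendsto_fun (fun N => ?_) ?_)
  · exact measurableSet_exists_tendsto fun s =>
      Finset.measurable_fun_sum s fun p _ => h_meas n p
  · simp only [Finset.expect_eq_sum_div_card]
    exact (Finset.measurable_fun_sum _ fun n _ => Measurable.tsum (h_meas n)).div_const _
  · exact (measurable_integral_comp_mulVec_add hg).const_mul C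

theorem ae_tendsto_expect_tsum (h : IsMoireBilayer A₁ A₂ M) {g : (ι → ℝ) → (ι → ℝ) → ℝ}
    (hg : Measurable (Function.uncurry g))
    (hg_per : ∀ x y m, g (x + M *ᵥ intVec ι m) (y + M *ᵥ intVec ι m) = g x y)
    (hg_int : ∀ c, Integrable fun ξ => g (A₁ *ᵥ ξ) (A₂ *ᵥ ξ + c)) :
    ∀ᵐ γ : (ι → ℝ) × (ι → ℝ),
      (∀ n, Summable fun p => g (A₁ *ᵥ intVec ι n + γ.1) (A₂ *ᵥ intVec ι p + γ.2)) ∧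
      Tendsto (fun N => 𝔼 n ∈ intBox ι N, ∑' p,
        g (A₁ *ᵥ intVec ι n + γ.1) (A₂ *ᵥ intVec ι p + γ.2)) atTop
        (𝓝 (|A₁.det| * |M.det|⁻¹ * ∫ ξ, g (A₁ *ᵥ ξ + γ.1) (A₂ *ᵥ ξ + γ.2))) :=
  ae_prod_of_forall_ae_shear (measurableSet_setOf_summable_and_tendsto hg _)
    (measurable_mulVec (A₂ * A₁⁻¹)) fun c => h.ae_tendsto_expect_tsum_slice hg hg_per (hg_int c)

end IsMoireBilayer

theorem tsum_prod_fintype {β Q : Type*} [Fintype Q] {f : β × Q → ℝ}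
    (hf : ∀ b, Summable fun p => f (p, b)) : ∑' x, f x = ∑ b, ∑' p, f (p, b) := by
  have h_swap : Summable fun x : Q × β => f x.swap := by
    refine summable_norm_iff.1 ((summable_prod_of_nonneg fun _ => norm_nonneg _).2
      ⟨fun b => (hf b).norm, (hasSum_fintype _).summable⟩)
  rw [← (Equiv.prodComm Q β).tsum_eq, ← tsum_fintype (L := .unconditional Q)]
  exact h_swap.tsum_prod' hf

variable {P Q : Type*} [Fintype P] [Fintype Q]

/-- The interlayer energy density of the first layer, truncated to the lattice points with index
in the box of radius `N`, for sublattice labels `P`, `Q` and a pair interaction `g a b x y` of the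
atoms with undeformed positions `x`, `y`. The layers `A₁ ℤ^ι`, `A₂ ℤ^ι` are translated by
`γ.1`, `γ.2`. -/
def truncatedEnergy (A₁ A₂ : Matrix ι ι ℝ) (g : P → Q → (ι → ℝ) → (ι → ℝ) → ℝ)
    (γ : (ι → ℝ) × (ι → ℝ)) (N : ℕ) : ℝ :=
  (|A₁.det| * (2 * N + 1 : ℝ) ^ Fintype.card ι)⁻¹ * ∑ n ∈ intBox ι N, ∑ a, (1 / 2 : ℝ) *
    ∑' p : (ι → ℤ) × Q, g a p.2 (A₁ *ᵥ intVec ι n + γ.1) (A₂ *ᵥ intVec ι p.1 + γ.2)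

/-- The thermodynamic limit of `truncatedEnergy`: the integral of the pair interaction over all
relative configurations of the layers, per volume of the cell of the moiré lattice `M ℤ^ι`. -/
def limitEnergy (A₁ A₂ M : Matrix ι ι ℝ) (g : P → Q → (ι → ℝ) → (ι → ℝ) → ℝ)
    (γ : (ι → ℝ) × (ι → ℝ)) : ℝ :=
  (2 * |M.det| : ℝ)⁻¹ * ∑ a, ∑ b, ∫ ξ, g a b (A₁ *ᵥ ξ + γ.1) (A₂ *ᵥ ξ + γ.2)

theorem truncatedEnergy_eq_sum_expect {A₁ A₂ : Matrix ι ι ℝ}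
    {g : P → Q → (ι → ℝ) → (ι → ℝ) → ℝ} {γ : (ι → ℝ) × (ι → ℝ)}
    (hg : ∀ a b n, Summable fun p => g a b (A₁ *ᵥ intVec ι n + γ.1) (A₂ *ᵥ intVec ι p + γ.2))
    (N : ℕ) :
    truncatedEnergy A₁ A₂ g γ N = |A₁.det|⁻¹ * (1 / 2) * ∑ a, ∑ b, 𝔼 n ∈ intBox ι N,
      ∑' p, g a b (A₁ *ᵥ intVec ι n + γ.1) (A₂ *ᵥ intVec ι p + γ.2) := by
  have h_tsum (a n) := tsum_prod_fintype (f := fun p : (ι → ℤ) × Q =>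
    g a p.2 (A₁ *ᵥ intVec ι n + γ.1) (A₂ *ᵥ intVec ι p.1 + γ.2)) fun b => hg a b n
  simp only [← Finset.expect_sum_comm, truncatedEnergy, h_tsum, ← Finset.mul_sum]
  rw [Finset.expect_eq_sum_div_card, card_intBox]
  push_cast
  ring

theorem limitEnergy_swap (A₁ A₂ M : Matrix ι ι ℝ) (g : P → Q → (ι → ℝ) → (ι → ℝ) → ℝ)
    (γ : (ι → ℝ) × (ι → ℝ)) :
    limitEnergy A₂ A₁ (-M) (fun b a y x => g a b x y) γ.swap = limitEnergy A₁ A₂ M g γ := by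
  have h_det : |(-M).det| = |M.det| := by simp [Matrix.det_neg, abs_mul]
  rw [limitEnergy, limitEnergy, h_det, Finset.sum_comm]
  rfl

namespace IsMoireBilayer

variable {A₁ A₂ M : Matrix ι ι ℝ} {g : P → Q → (ι → ℝ) → (ι → ℝ) → ℝ}

theorem ae_tendsto_truncatedEnergy (h : IsMoireBilayer A₁ A₂ M)
    (hg : ∀ a b, Measurable (Function.uncurry (g a b)))
    (hg_per : ∀ a b x y m, g a b (x + M *ᵥ intVec ι m) (y + M *ᵥ intVec ι m) = g a b x y)
    (hg_int : ∀ a b c, Integrable fun ξ => g a b (A₁ *ᵥ ξ) (A₂ *ᵥ ξ + c)) :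
    ∀ᵐ γ, Tendsto (truncatedEnergy A₁ A₂ g γ) atTop (𝓝 (limitEnergy A₁ A₂ M g γ)) := by
  have h_pair := ae_all_iff.2 fun a => ae_all_iff.2 fun b =>
    h.ae_tendsto_expect_tsum (hg a b) (hg_per a b) (hg_int a b)
  filter_upwards [h_pair] with γ hγ
  have h_sum := (tendsto_finsetSum univ fun a _ => tendsto_finsetSum univ fun b _ =>
    (hγ a b).2).const_mul (|A₁.det|⁻¹ * (1 / 2))
  have h_lim : |A₁.det|⁻¹ * (1 / 2) * ∑ a, ∑ b, |A₁.det| * |M.det|⁻¹ *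
      ∫ ξ, g a b (A₁ *ᵥ ξ + γ.1) (A₂ *ᵥ ξ + γ.2) = limitEnergy A₁ A₂ M g γ := by
    have h_det := abs_ne_zero.2 h.isUnit_det_left.ne_zero
    simp only [limitEnergy, ← Finset.mul_sum]
    field_simp
  rw [← h_lim]
  exact h_sum.congr fun N => (truncatedEnergy_eq_sum_expect (fun a b => (hγ a b).1) N).symm

theorem ae_tendsto_truncatedEnergy_swap (h : IsMoireBilayer A₁ A₂ M)
    (hg : ∀ a b, Measurable (Function.uncurry (g a b)))
    (hg_per : ∀ a b x y m, g a b (x + M *ᵥ intVec ι m) (y + M *ᵥ intVec ι m) = g a b x y)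
    (hg_int : ∀ a b c, Integrable fun ξ => g a b (A₁ *ᵥ ξ + c) (A₂ *ᵥ ξ)) :
    ∀ᵐ γ : (ι → ℝ) × (ι → ℝ),
      Tendsto (truncatedEnergy A₂ A₁ (fun b a y x => g a b x y) γ.swap) atTop
        (𝓝 (limitEnergy A₁ A₂ M g γ)) := by
  have h_swap := h.symm.ae_tendsto_truncatedEnergy (g := fun b a y x => g a b x y)
    (fun b a => (hg a b).comp measurable_swap)
    (fun b a y x m => by simpa [Matrix.neg_mulVec, Matrix.mulVec_neg] using hg_per a b x y (-m))
    (fun b a => hg_int a b)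
  filter_upwards [Measure.measurePreserving_swap.quasiMeasurePreserving.ae h_swap] with γ hγ
  rwa [limitEnergy_swap] at hγ

theorem integrable_comp_mulVec_of_abs_le (h : IsMoireBilayer A₁ A₂ M)
    {g : (ι → ℝ) → (ι → ℝ) → ℝ} (hg : Measurable (Function.uncurry g)) {C s : ℝ}
    (hs : Fintype.card ι < s) (hg_le : ∀ x y, |g x y| ≤ C * (1 + ‖x - y‖) ^ (-s))
    (x y : ι → ℝ) : Integrable fun ξ => g (A₁ *ᵥ ξ + x) (A₂ *ᵥ ξ + y) := by
  have h_decay : Integrable fun z : ι → ℝ => (1 + ‖z + (x - y)‖) ^ (-s) :=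
    (integrable_one_add_norm (by simpa using hs)).comp_add_right (x - y)
  have h_bound := (integrable_comp_mulVec_iff h.isUnit_det_sub (by fun_prop)).2 h_decay
  refine (h_bound.const_mul C).mono' ?_ (.of_forall fun ξ => ?_)
  · exact (hg.comp (((measurable_mulVec A₁).add_const x).prodMk
      ((measurable_mulVec A₂).add_const y))).aestronglyMeasurable
  · simpa [Matrix.sub_mulVec, sub_add_sub_comm] using hg_le (A₁ *ᵥ ξ + x) (A₂ *ᵥ ξ + y)

end IsMoireBilayer

/-! ### Decay of the pair interaction -/

theorem emb_add (x y : Fin 2 → ℝ) : emb (x + y) = emb x + emb y := by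
  ext i; fin_cases i <;> simp [emb]

theorem emb_sub (x y : Fin 2 → ℝ) : emb (x - y) = emb x - emb y := by
  ext i; fin_cases i <;> simp [emb]

theorem norm_le_norm_emb (x : Fin 2 → ℝ) : ‖x‖ ≤ ‖emb x‖ := by
  refine (pi_norm_le_iff_of_nonneg (norm_nonneg _)).2 fun i => ?_
  fin_cases i
  exacts [norm_le_pi_norm (emb x) 0, norm_le_pi_norm (emb x) 1]

theorem measurable_emb : Measurable emb := by
  refine measurable_pi_iff.2 fun i => ?_
  fin_cases i
  exacts [measurable_pi_apply 0, measurable_pi_apply 1, measurable_const]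

theorem norm_le_norm3 (z : Fin 3 → ℝ) : ‖z‖ ≤ norm3 z := by
  refine (pi_norm_le_iff_of_nonneg (Real.sqrt_nonneg _)).2 fun i => Real.abs_le_sqrt ?_
  rw [← Fin.sum_univ_three fun i => z i ^ 2]
  exact single_le_sum (f := fun i => z i ^ 2) (fun _ _ => sq_nonneg _) (mem_univ i)

theorem one_add_norm_le_two_mul_jap3 (z : Fin 3 → ℝ) : 1 + ‖z‖ ≤ 2 * jap3 z := by
  have h_one : 1 ≤ jap3 z := Real.one_le_sqrt.2 (by nlinarith [sq_nonneg (norm3 z)])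
  have h_norm : norm3 z ≤ jap3 z := Real.le_sqrt_of_sq_le (by linarith)
  linarith [norm_le_norm3 z]

theorem abs_le_mul_rpow_neg_of_rpow_mul_abs_le {a b t s C K : ℝ} (hs : 0 ≤ s) (hb : 0 < b)
    (hba : b ≤ K * a) (hK : 0 < K) (h : a ^ s * |t| ≤ C) : |t| ≤ C * K ^ s * b ^ (-s) := by
  have ha : 0 ≤ a := (pos_of_mul_pos_right (hb.trans_le hba) hK.le).le
  rw [Real.rpow_neg hb.le, ← div_eq_mul_inv, le_div_iff₀ (Real.rpow_pos_of_pos hb s)]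
  calc |t| * b ^ s ≤ |t| * (K * a) ^ s := by gcongr
    _ = a ^ s * |t| * K ^ s := by rw [Real.mul_rpow hK.le ha]; ring
    _ ≤ C * K ^ s := by gcongr

/-- The position of an atom of sublattice `α` after the displacement `u`, where `τ` denotes the
sublattice shifts. -/
def deformedPosition {𝓐 : Type*} (τ : 𝓐 → Fin 2 → ℝ) (u : (Fin 2 → ℝ) → 𝓐 → Fin 3 → ℝ)
    (x : Fin 2 → ℝ) (α : 𝓐) : Fin 3 → ℝ :=
  emb x + emb (τ α) + u x α

section DeformedPosition

variable {𝓐₁ 𝓐₂ : Type*} {τ₁ : 𝓐₁ → Fin 2 → ℝ} {τ₂ : 𝓐₂ → Fin 2 → ℝ}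
  {u₁ : (Fin 2 → ℝ) → 𝓐₁ → Fin 3 → ℝ} {u₂ : (Fin 2 → ℝ) → 𝓐₂ → Fin 3 → ℝ}

theorem measurable_deformedPosition {α : 𝓐₁} (hu : Measurable fun x => u₁ x α) :
    Measurable fun x => deformedPosition τ₁ u₁ x α :=
  (measurable_emb.add_const _).add hu

theorem deformedPosition_add {x y : Fin 2 → ℝ} {α : 𝓐₁} (hu : u₁ (x + y) α = u₁ x α) :
    deformedPosition τ₁ u₁ (x + y) α = deformedPosition τ₁ u₁ x α + emb y := by
  rw [deformedPosition, deformedPosition, hu, emb_add]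
  abel

theorem deformedPosition_sub_apply_two (x y : Fin 2 → ℝ) (α₁ : 𝓐₁) (α₂ : 𝓐₂) :
    (deformedPosition τ₁ u₁ x α₁ - deformedPosition τ₂ u₂ y α₂) 2 = u₁ x α₁ 2 - u₂ y α₂ 2 := by
  change 0 + 0 + u₁ x α₁ 2 - (0 + 0 + u₂ y α₂ 2) = _
  simp only [zero_add]

theorem norm_sub_le_norm_deformedPosition_sub {C₁ C₂ : ℝ} (α₁ : 𝓐₁) (α₂ : 𝓐₂)
    (hu₁ : ∀ x, ‖u₁ x α₁‖ ≤ C₁) (hu₂ : ∀ x, ‖u₂ x α₂‖ ≤ C₂) (x y : Fin 2 → ℝ) :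
    ‖x - y‖ ≤ ‖deformedPosition τ₁ u₁ x α₁ - deformedPosition τ₂ u₂ y α₂‖ +
      (‖emb (τ₁ α₁ - τ₂ α₂)‖ + C₁ + C₂) := by
  have h_emb : emb (x - y) = deformedPosition τ₁ u₁ x α₁ - deformedPosition τ₂ u₂ y α₂ -
      emb (τ₁ α₁ - τ₂ α₂) - u₁ x α₁ + u₂ y α₂ := by
    simp only [deformedPosition, emb_sub]
    abel
  refine (norm_le_norm_emb (x - y)).trans ?_
  rw [h_emb]
  refine (norm_add_le_of_le (norm_sub_le_of_le (norm_sub_le _ _) (hu₁ x)) (hu₂ y)).trans_eq ?_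
  ring

/-- The interaction `v α₁ α₂` of the atoms of the sublattices `α₁` and `α₂`, as a function of the
undeformed positions `x` and `y`. -/
def pairInteraction (v : 𝓐₁ → 𝓐₂ → (Fin 3 → ℝ) → ℝ) (τ₁ : 𝓐₁ → Fin 2 → ℝ)
    (τ₂ : 𝓐₂ → Fin 2 → ℝ) (u₁ : (Fin 2 → ℝ) → 𝓐₁ → Fin 3 → ℝ) (u₂ : (Fin 2 → ℝ) → 𝓐₂ → Fin 3 → ℝ)
    (α₁ : 𝓐₁) (α₂ : 𝓐₂) (x y : Fin 2 → ℝ) : ℝ :=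
  v α₁ α₂ (deformedPosition τ₁ u₁ x α₁ - deformedPosition τ₂ u₂ y α₂)

variable {v : 𝓐₁ → 𝓐₂ → (Fin 3 → ℝ) → ℝ}

theorem pairInteraction_swap (hv : ∀ α₁ α₂ z, v α₁ α₂ (-z) = v α₁ α₂ z) :
    pairInteraction (fun α₂ α₁ => v α₁ α₂) τ₂ τ₁ u₂ u₁ =
      fun α₂ α₁ y x => pairInteraction v τ₁ τ₂ u₁ u₂ α₁ α₂ x y := by
  funext α₂ α₁ y x
  rw [pairInteraction, pairInteraction, ← hv, neg_sub]

variable {α₁ : 𝓐₁} {α₂ : 𝓐₂}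

theorem measurable_pairInteraction (hv : Measurable (v α₁ α₂)) (hu₁ : Measurable fun x => u₁ x α₁)
    (hu₂ : Measurable fun x => u₂ x α₂) :
    Measurable (Function.uncurry (pairInteraction v τ₁ τ₂ u₁ u₂ α₁ α₂)) :=
  hv.comp <| ((measurable_deformedPosition hu₁).comp measurable_fst).sub
    ((measurable_deformedPosition hu₂).comp measurable_snd)

theorem pairInteraction_add_add {x y R : Fin 2 → ℝ} (hu₁ : u₁ (x + R) α₁ = u₁ x α₁)
    (hu₂ : u₂ (y + R) α₂ = u₂ y α₂) :
    pairInteraction v τ₁ τ₂ u₁ u₂ α₁ α₂ (x + R) (y + R) =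
      pairInteraction v τ₁ τ₂ u₁ u₂ α₁ α₂ x y := by
  rw [pairInteraction, deformedPosition_add hu₁, deformedPosition_add hu₂,
    add_sub_add_right_eq_sub, pairInteraction]

theorem exists_abs_pairInteraction_le {L C C₁ C₂ s : ℝ} (hs : 0 ≤ s)
    (hv : ∀ z ∈ slab L, jap3 z ^ s * |v α₁ α₂ z| ≤ C)
    (hu₁ : ∀ x, ‖u₁ x α₁‖ ≤ C₁) (hu₂ : ∀ x, ‖u₂ x α₂‖ ≤ C₂)
    (hL : ∀ x y, |u₁ x α₁ 2 - u₂ y α₂ 2| ≤ L) :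
    ∃ K, ∀ x y, |pairInteraction v τ₁ τ₂ u₁ u₂ α₁ α₂ x y| ≤ K * (1 + ‖x - y‖) ^ (-s) := by
  set D : ℝ := ‖emb (τ₁ α₁ - τ₂ α₂)‖ + C₁ + C₂
  have hD : 0 ≤ D := add_nonneg (add_nonneg (norm_nonneg _) ((norm_nonneg _).trans (hu₁ 0)))
    ((norm_nonneg _).trans (hu₂ 0))
  refine ⟨C * ((1 + D) * 2) ^ s, fun x y => ?_⟩
  set z := deformedPosition τ₁ u₁ x α₁ - deformedPosition τ₂ u₂ y α₂
  have hz : z ∈ slab L := abs_le.1 <|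
    (congrArg abs (deformedPosition_sub_apply_two x y α₁ α₂)).trans_le (hL x y)
  refine abs_le_mul_rpow_neg_of_rpow_mul_abs_le hs (by positivity) ?_ (by positivity) (hv z hz)
  calc 1 + ‖x - y‖ ≤ 1 + (‖z‖ + D) := by
        gcongr; exact norm_sub_le_norm_deformedPosition_sub α₁ α₂ hu₁ hu₂ x y
    _ ≤ (1 + D) * (1 + ‖z‖) := by nlinarith [mul_nonneg hD (norm_nonneg z)]
    _ ≤ (1 + D) * 2 * jap3 z := by
        rw [mul_assoc]; gcongr; exact one_add_norm_le_two_mul_jap3 z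

end DeformedPosition

/-! ### Reciprocal lattices -/

theorem isUnit_det_recip {A : Matrix (Fin 2) (Fin 2) ℝ} (hA : IsUnit A.det) :
    IsUnit (recip A).det := by
  rw [recip, Matrix.det_smul, Matrix.det_transpose]
  exact ((isUnit_iff_ne_zero.2 (by positivity)).pow _).mul (Matrix.isUnit_nonsing_inv_det A hA)

theorem inv_recip {A : Matrix (Fin 2) (Fin 2) ℝ} (hA : IsUnit A.det) :
    (recip A)⁻¹ = (2 * π)⁻¹ • Aᵀ := by
  refine Matrix.inv_eq_left_inv ?_
  rw [recip, Matrix.smul_mul, Matrix.mul_smul, smul_smul, inv_mul_cancel₀ (by positivity),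
    one_smul, ← Matrix.transpose_mul, Matrix.nonsing_inv_mul _ hA, Matrix.transpose_one]

theorem eq_zero_of_recip_mulVec_intVec_eq_zero {A : Matrix (Fin 2) (Fin 2) ℝ} (hA : IsUnit A.det)
    {n : Fin 2 → ℤ} (h : recip A *ᵥ intVec _ n = 0) : n = 0 := by
  rw [← map_eq_zero_iff (intVec (Fin 2)) intVec_injective]
  exact Matrix.eq_zero_of_mulVec_eq_zero (isUnit_det_recip hA).ne_zero h

theorem isMoireBilayer_recip {A₁ A₂ : Matrix (Fin 2) (Fin 2) ℝ} (hA₁ : IsUnit A₁.det)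
    (hA₂ : IsUnit A₂.det) (hB : IsUnit (recip A₁ - recip A₂).det)
    (hinc : Incommensurate (recip A₁) (recip A₂)) :
    IsMoireBilayer A₁ A₂ (recip (recip A₁ - recip A₂)) where
  isUnit_det_left := hA₁
  isUnit_det_right := hA₂
  isUnit_det_moire := isUnit_det_recip hB
  inv_moire := by
    rw [inv_recip hB, recip, recip, ← smul_sub, Matrix.transpose_smul, smul_smul,
      inv_mul_cancel₀ (by positivity), one_smul, Matrix.transpose_sub, Matrix.transpose_transpose,
      Matrix.transpose_transpose]
  incommensurate k m hkm := by
    have h_zero := hinc _ ⟨k, rfl⟩ _ ⟨-m, rfl⟩ (by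
      change recip A₁ *ᵥ intVec _ k + recip A₂ *ᵥ intVec _ (-m) = 0
      rw [map_neg, Matrix.mulVec_neg, recip, recip, Matrix.smul_mulVec, Matrix.smul_mulVec, hkm,
        add_neg_cancel])
    exact ⟨eq_zero_of_recip_mulVec_intVec_eq_zero hA₁ h_zero.1,
      neg_eq_zero.1 (eq_zero_of_recip_mulVec_intVec_eq_zero hA₂ h_zero.2)⟩

/-! ### Interlayer energies -/

theorem isUnit_det_smul_Rot_mul {A : Matrix (Fin 2) (Fin 2) ℝ} (hA : IsUnit A.det) {c : ℝ}
    (hc : c ≠ 0) (φ : ℝ) : IsUnit (c • (Rot φ * A)).det := by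
  have h_rot : (Rot φ).det = 1 := by
    rw [Rot, Matrix.det_fin_two_of, ← Real.cos_sq_add_sin_sq φ]
    ring
  rw [Matrix.det_smul, Matrix.det_mul, h_rot, one_mul]
  exact (hc.isUnit.pow _).mul hA

theorem abs_apply_le_norm3 (z : Fin 3 → ℝ) (i : Fin 3) : |z i| ≤ norm3 z :=
  (norm_le_pi_norm z i).trans (norm_le_norm3 z)

theorem abs_apply_le_iSup {𝓐 : Type*} {u : (Fin 2 → ℝ) → 𝓐 → Fin 3 → ℝ}
    (hu : ∃ C, ∀ x α, norm3 (u x α) ≤ C) (i : Fin 3) (x : Fin 2 → ℝ) (α : 𝓐) :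
    |u x α i| ≤ ⨆ x, ⨆ α, |u x α i| := by
  obtain ⟨C, hC⟩ := hu
  have h_le (x α) : |u x α i| ≤ C := (abs_apply_le_norm3 _ i).trans (hC x α)
  have : Nonempty 𝓐 := ⟨α⟩
  exact (le_ciSup (f := fun α => |u x α i|) ⟨C, Set.forall_mem_range.2 (h_le x)⟩ α).trans <|
    le_ciSup (f := fun x => ⨆ α, |u x α i|)
      ⟨C, Set.forall_mem_range.2 fun x => ciSup_le (h_le x)⟩ x

theorem interlayer_energy_rough_limit_general {A₁ A₂ M : Matrix (Fin 2) (Fin 2) ℝ}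
    (h : IsMoireBilayer A₁ A₂ M) {𝓐₁ 𝓐₂ : Type*} [Fintype 𝓐₁] [Fintype 𝓐₂]
    (τ₁ : 𝓐₁ → Fin 2 → ℝ) (τ₂ : 𝓐₂ → Fin 2 → ℝ)
    {u₁ : (Fin 2 → ℝ) → 𝓐₁ → Fin 3 → ℝ} {u₂ : (Fin 2 → ℝ) → 𝓐₂ → Fin 3 → ℝ}
    (hu₁_meas : ∀ α, Measurable fun x => u₁ x α) (hu₂_meas : ∀ α, Measurable fun x => u₂ x α)
    (hu₁ : ∀ α, ∃ C, ∀ x, norm3 (u₁ x α) ≤ C) (hu₂ : ∀ α, ∃ C, ∀ x, norm3 (u₂ x α) ≤ C)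
    (hu₁_per : ∀ x, ∀ R ∈ lat M, ∀ α, u₁ (x + R) α = u₁ x α)
    (hu₂_per : ∀ x, ∀ R ∈ lat M, ∀ α, u₂ (x + R) α = u₂ x α)
    {v : 𝓐₁ → 𝓐₂ → (Fin 3 → ℝ) → ℝ} (hv_meas : ∀ α₁ α₂, Measurable (v α₁ α₂))
    (hv_even : ∀ α₁ α₂ z, v α₁ α₂ (-z) = v α₁ α₂ z) {r L : ℝ} (hr : 1 < r)
    (hL : ∀ α₁ α₂ x y, |u₁ x α₁ 2 - u₂ y α₂ 2| ≤ L)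
    (hv : ∀ α₁ α₂, ∃ C, ∀ z ∈ slab L, jap3 z ^ (2 * r) * |v α₁ α₂ z| ≤ C) :
    ∀ᵐ γ : (Fin 2 → ℝ) × (Fin 2 → ℝ),
      Tendsto (truncatedEnergy A₁ A₂ (pairInteraction v τ₁ τ₂ u₁ u₂) γ) atTop
        (𝓝 (limitEnergy A₁ A₂ M (pairInteraction v τ₁ τ₂ u₁ u₂) γ)) ∧
      Tendsto (truncatedEnergy A₂ A₁ (pairInteraction (fun α₂ α₁ => v α₁ α₂) τ₂ τ₁ u₂ u₁) γ.swap)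
        atTop (𝓝 (limitEnergy A₁ A₂ M (pairInteraction v τ₁ τ₂ u₁ u₂) γ)) := by
  have h_meas (α₁ α₂) := measurable_pairInteraction (τ₁ := τ₁) (τ₂ := τ₂) (hv_meas α₁ α₂)
    (hu₁_meas α₁) (hu₂_meas α₂)
  have h_per (α₁ α₂ x y) (m : Fin 2 → ℤ) := pairInteraction_add_add (v := v) (τ₁ := τ₁) (τ₂ := τ₂)
    (hu₁_per x _ ⟨m, rfl⟩ α₁) (hu₂_per y _ ⟨m, rfl⟩ α₂)
  have h_int (α₁ α₂ x y) :
      Integrable fun ξ => pairInteraction v τ₁ τ₂ u₁ u₂ α₁ α₂ (A₁ *ᵥ ξ + x) (A₂ *ᵥ ξ + y) := by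
    obtain ⟨C, hC⟩ := hv α₁ α₂
    obtain ⟨C₁, hC₁⟩ := hu₁ α₁
    obtain ⟨C₂, hC₂⟩ := hu₂ α₂
    obtain ⟨K, hK⟩ := exists_abs_pairInteraction_le (by linarith) hC
      (fun x => (norm_le_norm3 _).trans (hC₁ x)) (fun x => (norm_le_norm3 _).trans (hC₂ x))
      (hL α₁ α₂)
    refine h.integrable_comp_mulVec_of_abs_le (h_meas α₁ α₂) ?_ hK x y
    rw [Fintype.card_fin]
    push_cast
    linarith
  rw [pairInteraction_swap hv_even]
  exact (h.ae_tendsto_truncatedEnergy h_meas h_per fun α₁ α₂ c => by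
      simpa using h_int α₁ α₂ 0 c).and
    (h.ae_tendsto_truncatedEnergy_swap h_meas h_per fun α₁ α₂ c => by
      simpa using h_int α₁ α₂ c 0)

end

/-- Theorem: almost sure thermodynamic limit of the interlayer energy
density for rough displacements and interlayer pair potentials. -/
theorem interlayer_energy_rough_limit (θ q r : ℝ) (hq : 0 < q) (hr : 1 < r)
    (A A1 A2 B1 B2 BM AM : Matrix (Fin 2) (Fin 2) ℝ)
    (hA : IsUnit A.det)
    (hA1 : A1 = (Real.sqrt q)⁻¹ • (Rot (-(θ / 2)) * A))
    (hA2 : A2 = Real.sqrt q • (Rot (θ / 2) * A))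
    (hB1 : B1 = recip A1) (hB2 : B2 = recip A2)
    (hBM : BM = B1 - B2) (hBMinv : IsUnit BM.det)
    (hAM : AM = recip BM)
    (hinc : Incommensurate B1 B2) (hincstar : Incommensurate A1 A2)
    (𝓐1 𝓐2 : Type) [Fintype 𝓐1] [Fintype 𝓐2] [Nonempty 𝓐1] [Nonempty 𝓐2]
    (τ1 : 𝓐1 → Fin 2 → ℝ) (τ2 : 𝓐2 → Fin 2 → ℝ)
    (u1 : (Fin 2 → ℝ) → 𝓐1 → Fin 3 → ℝ) (u2 : (Fin 2 → ℝ) → 𝓐2 → Fin 3 → ℝ)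
    -- u_k(·, α_k) ∈ L^∞(ℝ²; ℝ³), measurable and 𝓡_𝓜-periodic
    (hu1meas : ∀ α, Measurable fun x => u1 x α)
    (hu2meas : ∀ α, Measurable fun x => u2 x α)
    (hu1 : ∃ C : ℝ, ∀ x α, norm3 (u1 x α) ≤ C)
    (hu2 : ∃ C : ℝ, ∀ x α, norm3 (u2 x α) ≤ C)
    (hu1per : ∀ (x : Fin 2 → ℝ), ∀ rM ∈ lat AM, ∀ α, u1 (x + rM) α = u1 x α)
    (hu2per : ∀ (x : Fin 2 → ℝ), ∀ rM ∈ lat AM, ∀ α, u2 (x + rM) α = u2 x α)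
    (v : 𝓐1 → 𝓐2 → (Fin 3 → ℝ) → ℝ)
    (hvmeas : ∀ α1 α2, Measurable (v α1 α2))
    (hveven : ∀ α1 α2 z, v α1 α2 (-z) = v α1 α2 z)
    -- v_{(α₁,α₂)} ∈ L^∞_{2r}(ℝ² × [−L_u^z, L_u^z])
    (hv : ∀ α1 α2, ∃ C : ℝ, ∀ x ∈ slab
        ((⨆ a1 : 𝓐1, ⨆ a2 : 𝓐2, norm2 (τ1 a1 - τ2 a2)) +
          (⨆ x : Fin 2 → ℝ, ⨆ α : 𝓐1, |u1 x α 2|) +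
          (⨆ x : Fin 2 → ℝ, ⨆ α : 𝓐2, |u2 x α 2|)),
      jap3 x ^ (2 * r) * |v α1 α2 x| ≤ C) :
    ∀ᵐ γ ∂(volume.restrict ((cell A1) ×ˢ (cell A2))),
      -- j = 1
      Tendsto
        (fun N : ℕ => (|A1.det| * (2 * N + 1 : ℝ) ^ 2)⁻¹ *
          ∑ n ∈ box N, ∑ α1 : 𝓐1, (1 / 2 : ℝ) *
            ∑' p : (Fin 2 → ℤ) × 𝓐2,
              v α1 p.2
                ((emb (A1.mulVec (iv n) + γ.1) + emb (τ1 α1) +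
                    u1 (A1.mulVec (iv n) + γ.1) α1) -
                  (emb (A2.mulVec (iv p.1) + γ.2) + emb (τ2 p.2) +
                    u2 (A2.mulVec (iv p.1) + γ.2) p.2)))
        atTop
        (𝓝 ((2 * |AM.det| : ℝ)⁻¹ *
          ∑ α1 : 𝓐1, ∑ α2 : 𝓐2,
            ∫ ξ : Fin 2 → ℝ,
              v α1 α2
                (emb (A1.mulVec ξ + γ.1) + emb (τ1 α1) + u1 (A1.mulVec ξ + γ.1) α1 -
                  emb (A2.mulVec ξ + γ.2) - emb (τ2 α2) - u2 (A2.mulVec ξ + γ.2) α2))) ∧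
      -- j = 2
      Tendsto
        (fun N : ℕ => (|A2.det| * (2 * N + 1 : ℝ) ^ 2)⁻¹ *
          ∑ n ∈ box N, ∑ α2 : 𝓐2, (1 / 2 : ℝ) *
            ∑' p : (Fin 2 → ℤ) × 𝓐1,
              v p.2 α2
                ((emb (A2.mulVec (iv n) + γ.2) + emb (τ2 α2) +
                    u2 (A2.mulVec (iv n) + γ.2) α2) -
                  (emb (A1.mulVec (iv p.1) + γ.1) + emb (τ1 p.2) +
                    u1 (A1.mulVec (iv p.1) + γ.1) p.2)))
        atTop
        (𝓝 ((2 * |AM.det| : ℝ)⁻¹ *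
          ∑ α1 : 𝓐1, ∑ α2 : 𝓐2,
            ∫ ξ : Fin 2 → ℝ,
              v α1 α2
                (emb (A1.mulVec ξ + γ.1) + emb (τ1 α1) + u1 (A1.mulVec ξ + γ.1) α1 -
                  emb (A2.mulVec ξ + γ.2) - emb (τ2 α2) - u2 (A2.mulVec ξ + γ.2) α2))) := by
  subst hA1 hA2 hB1 hB2 hBM hAM
  have hq_sqrt : Real.sqrt q ≠ 0 := (Real.sqrt_pos.2 hq).ne'
  have h_moire := isMoireBilayer_recip (isUnit_det_smul_Rot_mul hA (inv_ne_zero hq_sqrt) _)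
    (isUnit_det_smul_Rot_mul hA hq_sqrt _) hBMinv hinc
  have hL (α1 α2 x y) : |u1 x α1 2 - u2 y α2 2| ≤
      (⨆ a1 : 𝓐1, ⨆ a2 : 𝓐2, norm2 (τ1 a1 - τ2 a2)) +
        (⨆ x : Fin 2 → ℝ, ⨆ α : 𝓐1, |u1 x α 2|) + (⨆ x : Fin 2 → ℝ, ⨆ α : 𝓐2, |u2 x α 2|) := by
    have h_shift : 0 ≤ ⨆ a1 : 𝓐1, ⨆ a2 : 𝓐2, norm2 (τ1 a1 - τ2 a2) :=
      Real.iSup_nonneg fun _ => Real.iSup_nonneg fun _ => Real.sqrt_nonneg _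
    linarith [abs_sub (u1 x α1 2) (u2 y α2 2), abs_apply_le_iSup hu1 2 x α1,
      abs_apply_le_iSup hu2 2 y α2]
  refine ae_restrict_of_ae ?_
  filter_upwards [interlayer_energy_rough_limit_general h_moire τ1 τ2 hu1meas hu2meas
    (fun α => hu1.imp fun _ hC x => hC x α) (fun α => hu2.imp fun _ hC x => hC x α)
    hu1per hu2per hvmeas hveven hr hL hv] with γ hγ
  simp only [sub_sub]
  exact hγ

end
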